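/- arXiv:0709.1514 — 2 statements merged into one kernel-verified Lean document; each statement's English description precedes it below -/
import Mathlib

section
/- For each p ∈ S, the partial derivative of F_N with respect to β_p exists and satisfies ∂F_N/∂β_p = β_p (1 − E⟨R_{1,2}^p⟩). -/
open MeasureTheory ProbabilityTheory Real Filter Topology

noncomputable section

/-- The spin value `±1` attached to a Boolean. -/
def spin (b : Bool) : ℝ := if b then 1 else -1

/-- Index set for the Gaussian disorder: pairs `(p, (i_1, …, i_p))` with `p ∈ S` and
`i_1, …, i_p ∈ {1, …, N}`. -/
abbrev DisorderIdx (S : Finset ℕ) (N : ℕ) := (p : {x // x ∈ S}) × (Fin (p : ℕ) → Fin N)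

/-- The law of the disorder: i.i.d. standard Gaussian random variables `g^{(p)}_{i_1…i_p}`. -/
def disorder (S : Finset ℕ) (N : ℕ) : Measure (DisorderIdx S N → ℝ) :=
  Measure.pi fun _ => gaussianReal 0 1

/-- The mixed `p`-spin Hamiltonian
`H_N(σ) = Σ_{p∈S} β_p N^{-(p-1)/2} Σ_{i_1,…,i_p} g^{(p)}_{i_1…i_p} σ_{i_1} ⋯ σ_{i_p}`. -/
def hamiltonian (S : Finset ℕ) (N : ℕ) (β : ℕ → ℝ) (g : DisorderIdx S N → ℝ)
    (σ : Fin N → Bool) : ℝ :=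
  ∑ p : {x // x ∈ S}, β (p : ℕ) * (N : ℝ) ^ (-(((p : ℕ) : ℝ) - 1) / 2) *
    ∑ i : Fin (p : ℕ) → Fin N, g ⟨p, i⟩ * ∏ j, spin (σ (i j))

/-- The energy including the external field: `H_N(σ) + h Σ_i σ_i`. -/
def energy (S : Finset ℕ) (N : ℕ) (h : ℝ) (β : ℕ → ℝ) (g : DisorderIdx S N → ℝ)
    (σ : Fin N → Bool) : ℝ :=
  hamiltonian S N β g σ + h * ∑ i, spin (σ i)

/-- The free energy `F_N(β) = N⁻¹ E log Σ_σ exp(H_N(σ) + h Σ_i σ_i)`. -/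
def freeEnergy (S : Finset ℕ) (N : ℕ) (h : ℝ) (β : ℕ → ℝ) : ℝ :=
  (N : ℝ)⁻¹ *
    ∫ g, Real.log (∑ σ : Fin N → Bool, Real.exp (energy S N h β g σ)) ∂(disorder S N)

/-- The Gibbs measure `G(σ) = exp(H_N(σ) + h Σ_i σ_i) / Σ_τ exp(H_N(τ) + h Σ_i τ_i)`. -/
def gibbs (S : Finset ℕ) (N : ℕ) (h : ℝ) (β : ℕ → ℝ) (g : DisorderIdx S N → ℝ)
    (σ : Fin N → Bool) : ℝ :=
  Real.exp (energy S N h β g σ) / ∑ τ : Fin N → Bool, Real.exp (energy S N h β g τ)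

/-- The overlap `R_{1,2} = N⁻¹ Σ_{i ≤ N} σ¹_i σ²_i`. -/
def overlap (N : ℕ) (σ1 σ2 : Fin N → Bool) : ℝ :=
  (N : ℝ)⁻¹ * ∑ i, spin (σ1 i) * spin (σ2 i)

/-- Gibbs average `⟨f(σ¹,σ²)⟩` over two independent replicas from the Gibbs measure. -/
def gibbsAvg2 (S : Finset ℕ) (N : ℕ) (h : ℝ) (β : ℕ → ℝ) (g : DisorderIdx S N → ℝ)
    (f : (Fin N → Bool) → (Fin N → Bool) → ℝ) : ℝ :=
  ∑ σ1 : Fin N → Bool, ∑ σ2 : Fin N → Bool, f σ1 σ2 * gibbs S N h β g σ1 * gibbs S N h β g σ2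

/-- `E⟨R_{1,2}^p⟩`: expectation over the disorder of the Gibbs average of the `p`-th
power of the overlap. -/
def overlapMoment (S : Finset ℕ) (N : ℕ) (h : ℝ) (β : ℕ → ℝ) (p : ℕ) : ℝ :=
  ∫ g, gibbsAvg2 S N h β g (fun σ1 σ2 => overlap N σ1 σ2 ^ p) ∂(disorder S N)

/-!
The Hamiltonian is linear in `β_p`, so differentiating under the expectation gives
`N ∂F_N/∂β_p = E⟨U(σ)⟩`, where `U = ∂H_N/∂β_p` is again a linear form in the disorder. Gaussian
integration by parts turns this into `E⟨C(σ¹, σ¹) - C(σ¹, σ²)⟩` with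
`C(σ, τ) = E[U(σ) H_N(τ)] = N β_p R(σ, τ)^p`, and `R(σ, σ) = 1`.
-/

/-! ### Gaussian integration by parts -/

section GaussianReal

variable {μ : ℝ} {v : NNReal}

lemma hasDerivAt_gaussianPDFReal (μ : ℝ) (v : NNReal) (x : ℝ) :
    HasDerivAt (gaussianPDFReal μ v) (-((x - μ) / v) * gaussianPDFReal μ v x) x := by
  rw [gaussianPDFReal_def]
  have hexponent : HasDerivAt (fun y : ℝ => -(y - μ) ^ 2 / (2 * v)) (-((x - μ) / v)) x := by
    refine ((((hasDerivAt_id x).sub_const μ).pow 2).neg.div_const (2 * (v : ℝ))).congr_deriv ?_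
    simp only [id_eq]
    ring
  exact (hexponent.exp.const_mul _).congr_deriv (by ring)

lemma integrable_gaussianReal_iff (hv : v ≠ 0) {f : ℝ → ℝ} :
    Integrable f (gaussianReal μ v) ↔ Integrable (fun x => gaussianPDFReal μ v x * f x) := by
  rw [gaussianReal_of_var_ne_zero μ hv,
    integrable_withDensity_iff_integrable_smul' (measurable_gaussianPDF μ v)
      (Eventually.of_forall fun _ => gaussianPDF_lt_top)]
  simp only [toReal_gaussianPDF, smul_eq_mul]

theorem integral_sub_mul_gaussianReal {f f' : ℝ → ℝ} (hf : ∀ x, HasDerivAt f (f' x) x)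
    (hfi : Integrable f (gaussianReal μ v)) (hf'i : Integrable f' (gaussianReal μ v))
    (hxf : Integrable (fun x => (x - μ) * f x) (gaussianReal μ v)) :
    ∫ x, (x - μ) * f x ∂gaussianReal μ v = v * ∫ x, f' x ∂gaussianReal μ v := by
  rcases eq_or_ne v 0 with rfl | hv
  · simp
  have hv' : (v : ℝ) ≠ 0 := NNReal.coe_ne_zero.2 hv
  rw [integrable_gaussianReal_iff hv] at hfi hf'i hxf
  have hparts := integral_mul_deriv_eq_deriv_mul_of_integrable
    (fun x _ => hf x) (fun x _ => hasDerivAt_gaussianPDFReal μ v x)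
    ((hxf.const_mul (-(v : ℝ)⁻¹)).congr (.of_forall fun x => by simp only [Pi.mul_apply]; ring))
    (hf'i.congr (.of_forall fun x => mul_comm _ _))
    (hfi.congr (.of_forall fun x => mul_comm _ _))
  simp only [integral_gaussianReal_eq_integral_smul hv, smul_eq_mul]
  calc ∫ x, gaussianPDFReal μ v x * ((x - μ) * f x)
      = -v * ∫ x, f x * (-((x - μ) / v) * gaussianPDFReal μ v x) := by
        rw [← integral_const_mul]
        congr with x
        field_simp
    _ = v * ∫ x, gaussianPDFReal μ v x * f' x := by
        rw [hparts, neg_mul_neg]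
        simp only [mul_comm]

end GaussianReal

section ProductMeasure

open Function

variable {ι : Type*} [Fintype ι] [DecidableEq ι]

section Resampling

variable {α : ι → Type*} [∀ i, MeasurableSpace (α i)] (μ : ∀ i, Measure (α i))
  [∀ i, IsProbabilityMeasure (μ i)]

lemma measurePreserving_update_prod (j : ι) :
    MeasurePreserving (fun q : (∀ i, α i) × α j => update q.1 j q.2)
      ((Measure.pi μ).prod (μ j)) (Measure.pi μ) := by
  have hmeas : Measurable fun q : (∀ i, α i) × α j => update q.1 j q.2 := measurable_update'
  refine ⟨hmeas, (Measure.pi_eq fun s hs => ?_).symm⟩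
  have hpre : (fun q : (∀ i, α i) × α j => update q.1 j q.2) ⁻¹' Set.univ.pi s
      = Set.univ.pi (update s j Set.univ) ×ˢ s j := by
    ext ⟨g, x⟩
    simp only [Set.mem_preimage, Set.mem_univ_pi, Set.mem_prod, forall_update_iff _
      (p := fun i y => y ∈ s i), forall_update_iff _ (p := fun i t => g i ∈ t), Set.mem_univ,
      true_and, and_comm]
  rw [Measure.map_apply hmeas (.univ_pi hs), hpre, Measure.prod_prod, Measure.pi_pi]
  simp only [apply_update (fun i => μ i) s, measure_univ]
  rw [Finset.prod_update_of_mem (Finset.mem_univ j), one_mul, mul_comm,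
    ← Finset.erase_eq,
    Finset.mul_prod_erase _ (fun i => μ i (s i)) (Finset.mem_univ j)]

variable {μ} {E : Type*} [NormedAddCommGroup E] {f : (∀ i, α i) → E}

lemma ae_integrable_update (hf : Integrable f (Measure.pi μ)) (j : ι) :
    ∀ᵐ g ∂Measure.pi μ, Integrable (fun x => f (update g j x)) (μ j) :=
  ((measurePreserving_update_prod μ j).integrable_comp_of_integrable hf).prod_right_ae

lemma integral_pi_eq_integral_update [NormedSpace ℝ E] (hf : Integrable f (Measure.pi μ))
    (j : ι) :
    ∫ g, f g ∂Measure.pi μ = ∫ g, ∫ x, f (update g j x) ∂μ j ∂Measure.pi μ := by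
  have hmp := measurePreserving_update_prod μ j
  rw [integral_integral (f := fun g x => f (update g j x)) (hmp.integrable_comp_of_integrable hf),
    ← integral_map hmp.aemeasurable (by rw [hmp.map_eq]; exact hf.aestronglyMeasurable),
    hmp.map_eq]

end Resampling

theorem integral_eval_sub_mul_pi_gaussianReal {m : ι → ℝ} {v : ι → NNReal} {j : ι}
    {f f' : (ι → ℝ) → ℝ} (hf : ∀ g, HasDerivAt (fun y => f (update g j y)) (f' g) (g j))
    (hfi : Integrable f (.pi fun i => gaussianReal (m i) (v i)))
    (hf'i : Integrable f' (.pi fun i => gaussianReal (m i) (v i)))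
    (hgf : Integrable (fun g => (g j - m j) * f g) (.pi fun i => gaussianReal (m i) (v i))) :
    ∫ g, (g j - m j) * f g ∂Measure.pi (fun i => gaussianReal (m i) (v i))
      = v j * ∫ g, f' g ∂Measure.pi (fun i => gaussianReal (m i) (v i)) := by
  rw [integral_pi_eq_integral_update hgf j, integral_pi_eq_integral_update hf'i j,
    ← integral_const_mul]
  refine integral_congr_ae ?_
  filter_upwards [ae_integrable_update hfi j, ae_integrable_update hf'i j,
    ae_integrable_update hgf j] with g hfg hf'g hgfg
  simp only [update_self] at hgfg ⊢
  exact integral_sub_mul_gaussianReal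
    (fun x => by simpa only [update_idem, update_self] using hf (update g j x)) hfg hf'g hgfg

/-- The law of a family of i.i.d. standard Gaussian variables indexed by `ι`, as a measure on
`ι → ℝ` (rather than on `EuclideanSpace ℝ ι`). -/
abbrev stdGaussianPi (ι : Type*) [Fintype ι] : Measure (ι → ℝ) :=
  .pi fun _ => gaussianReal 0 1

theorem integral_dotProduct_mul_stdGaussianPi (v : ι → ℝ) {f : (ι → ℝ) → ℝ}
    {f' : (ι → ℝ) → ι → ℝ}
    (hf : ∀ j g, HasDerivAt (fun y => f (update g j y)) (f' g j) (g j))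
    (hfi : Integrable f (stdGaussianPi ι))
    (hf'i : ∀ j, Integrable (fun g => f' g j) (stdGaussianPi ι))
    (hgf : ∀ j, Integrable (fun g => g j * f g) (stdGaussianPi ι)) :
    ∫ g, (v ⬝ᵥ g) * f g ∂stdGaussianPi ι = ∫ g, v ⬝ᵥ f' g ∂stdGaussianPi ι := by
  have hcoord (j : ι) :
      ∫ g, g j * f g ∂stdGaussianPi ι = ∫ g, f' g j ∂stdGaussianPi ι := by
    simpa only [sub_zero, NNReal.coe_one, one_mul] using
      integral_eval_sub_mul_pi_gaussianReal (m := fun _ => 0) (v := fun _ => 1) (hf j) hfi (hf'i j)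
        (by simpa only [sub_zero] using hgf j)
  simp only [dotProduct, Finset.sum_mul, mul_assoc]
  rw [integral_finsetSum _ fun j _ => (hgf j).const_mul _,
    integral_finsetSum _ fun j _ => (hf'i j).const_mul _]
  simp only [integral_const_mul, hcoord]

end ProductMeasure

/-! ### Finite Gibbs measures -/

section FiniteGibbs

variable {K : Type*}

lemma hasDerivAt_add_smul_apply (X Y : K → ℝ) (t : ℝ) (σ : K) :
    HasDerivAt (fun s : ℝ => (X + s • Y) σ) (Y σ) t := by
  simpa using (hasDerivAt_mul_const (Y σ)).const_add (X σ)

variable [Fintype K]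

/-- The partition function `∑ σ, exp (E σ)` of a finite system; as for `energy`, the sign convention
is that large values of `E` are favoured. -/
def partitionFunction (E : K → ℝ) : ℝ := ∑ σ, exp (E σ)

/-- The Gibbs weight of the state `σ` in a finite system with energies `E`. -/
def gibbsWeight (E : K → ℝ) (σ : K) : ℝ := exp (E σ) / partitionFunction E

/-- The Gibbs average `⟨Y(σ)⟩` of a single-replica observable; averages over two replicas are
iterated single-replica averages. -/
def gibbsMean (E Y : K → ℝ) : ℝ := ∑ σ, gibbsWeight E σ * Y σ

lemma exp_le_partitionFunction (E : K → ℝ) (σ : K) : exp (E σ) ≤ partitionFunction E :=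
  Finset.single_le_sum (f := fun τ => exp (E τ)) (fun _ _ => (exp_pos _).le) (Finset.mem_univ σ)

lemma partitionFunction_pos [Nonempty K] (E : K → ℝ) : 0 < partitionFunction E :=
  Finset.sum_pos (fun _ _ => exp_pos _) Finset.univ_nonempty

lemma abs_gibbsWeight_le_one (E : K → ℝ) (σ : K) : |gibbsWeight E σ| ≤ 1 := by
  have hle := exp_le_partitionFunction E σ
  have hpos := (exp_pos (E σ)).trans_le hle
  rw [gibbsWeight, abs_of_pos (div_pos (exp_pos _) hpos)]
  exact div_le_one_of_le₀ hle hpos.le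

lemma gibbsWeight_eq_exp [Nonempty K] (E : K → ℝ) (σ : K) :
    gibbsWeight E σ = exp (E σ - log (partitionFunction E)) := by
  rw [exp_sub, exp_log (partitionFunction_pos E), gibbsWeight]

lemma sum_gibbsWeight [Nonempty K] (E : K → ℝ) : ∑ σ, gibbsWeight E σ = 1 := by
  simp only [gibbsWeight, ← Finset.sum_div]
  exact div_self (partitionFunction_pos E).ne'

lemma gibbsMean_const_mul (E : K → ℝ) (c : ℝ) (Y : K → ℝ) :
    gibbsMean E (fun σ => c * Y σ) = c * gibbsMean E Y := by
  simp only [gibbsMean, Finset.mul_sum, mul_left_comm]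

lemma gibbsMean_const_sub [Nonempty K] (E : K → ℝ) (c : ℝ) (Y : K → ℝ) :
    gibbsMean E (fun σ => c - Y σ) = c - gibbsMean E Y := by
  simp only [gibbsMean, mul_sub, Finset.sum_sub_distrib, ← Finset.sum_mul, sum_gibbsWeight, one_mul]

lemma abs_gibbsMean_le (E Y : K → ℝ) : |gibbsMean E Y| ≤ ∑ σ, |Y σ| := by
  refine (Finset.abs_sum_le_sum_abs _ _).trans (Finset.sum_le_sum fun σ _ => ?_)
  rw [abs_mul]
  exact mul_le_of_le_one_left (abs_nonneg _) (abs_gibbsWeight_le_one E σ)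

lemma abs_log_partitionFunction_le [Nonempty K] (E : K → ℝ) :
    |log (partitionFunction E)| ≤ log (Fintype.card K) + ∑ σ, |E σ| := by
  have hcard : (1 : ℝ) ≤ Fintype.card K := Nat.one_le_cast.2 Fintype.card_pos
  have habs (σ : K) : |E σ| ≤ ∑ τ, |E τ| :=
    Finset.single_le_sum (f := fun τ => |E τ|) (fun _ _ => abs_nonneg _) (Finset.mem_univ σ)
  refine abs_le.2 ⟨?_, ?_⟩
  · obtain ⟨σ⟩ := ‹Nonempty K›
    have hlower : E σ ≤ log (partitionFunction E) :=
      (le_log_iff_exp_le (partitionFunction_pos E)).2 (exp_le_partitionFunction E σ)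
    linarith [neg_abs_le (E σ), habs σ, log_nonneg hcard]
  · rw [log_le_iff_le_exp (partitionFunction_pos E), exp_add, exp_log (by linarith)]
    calc partitionFunction E ≤ ∑ _σ : K, exp (∑ τ, |E τ|) :=
          Finset.sum_le_sum fun σ _ => exp_le_exp.2 ((le_abs_self _).trans (habs σ))
      _ = Fintype.card K * exp (∑ τ, |E τ|) := by
          rw [Finset.sum_const, Finset.card_univ, nsmul_eq_mul]

lemma hasDerivAt_log_partitionFunction [Nonempty K] (X Y : K → ℝ) (t : ℝ) :
    HasDerivAt (fun s : ℝ => log (partitionFunction (X + s • Y))) (gibbsMean (X + t • Y) Y) t := by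
  have hsum : HasDerivAt (fun s : ℝ => partitionFunction (X + s • Y))
      (∑ σ, exp ((X + t • Y) σ) * Y σ) t :=
    .fun_sum fun σ _ => (hasDerivAt_add_smul_apply X Y t σ).exp
  refine (hsum.log (partitionFunction_pos _).ne').congr_deriv ?_
  simp only [gibbsMean, gibbsWeight, Finset.sum_div, div_mul_eq_mul_div]

lemma hasDerivAt_gibbsWeight (X Y : K → ℝ) (t : ℝ) (σ : K) :
    HasDerivAt (fun s : ℝ => gibbsWeight (X + s • Y) σ)
      (gibbsWeight (X + t • Y) σ * (Y σ - gibbsMean (X + t • Y) Y)) t := by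
  have : Nonempty K := ⟨σ⟩
  simp only [gibbsWeight_eq_exp]
  exact ((hasDerivAt_add_smul_apply X Y t σ).sub (hasDerivAt_log_partitionFunction X Y t)).exp

@[fun_prop]
lemma measurable_partitionFunction : Measurable (partitionFunction (K := K)) := by
  unfold partitionFunction
  fun_prop

@[fun_prop]
lemma measurable_gibbsWeight (σ : K) : Measurable fun E : K → ℝ => gibbsWeight E σ := by
  unfold gibbsWeight
  fun_prop

variable {Ω : Type*} [MeasurableSpace Ω] {P : Measure Ω} {X : Ω → K → ℝ}

lemma integrable_gibbsWeight_mul (hX : AEMeasurable X P) {Y : Ω → ℝ} (hY : Integrable Y P)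
    (σ : K) : Integrable (fun ω => gibbsWeight (X ω) σ * Y ω) P :=
  hY.bdd_mul ((measurable_gibbsWeight σ).comp_aemeasurable hX).aestronglyMeasurable
    (.of_forall fun ω => abs_gibbsWeight_le_one (X ω) σ)

lemma integrable_gibbsMean (hX : AEMeasurable X P) {Y : Ω → K → ℝ}
    (hY : ∀ σ, Integrable (fun ω => Y ω σ) P) :
    Integrable (fun ω => gibbsMean (X ω) (Y ω)) P :=
  integrable_finsetSum _ fun σ _ => integrable_gibbsWeight_mul hX (hY σ) σ

lemma integrable_const_sub_gibbsMean [IsFiniteMeasure P] (hX : AEMeasurable X P) (x : ℝ)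
    (Y : K → ℝ) : Integrable (fun ω => x - gibbsMean (X ω) Y) P :=
  (integrable_const x).sub (integrable_gibbsMean hX fun σ => integrable_const (Y σ))

lemma integral_gibbsMean (hX : AEMeasurable X P) {Y : Ω → K → ℝ}
    (hY : ∀ σ, Integrable (fun ω => Y ω σ) P) :
    ∫ ω, gibbsMean (X ω) (Y ω) ∂P = ∑ σ, ∫ ω, gibbsWeight (X ω) σ * Y ω σ ∂P :=
  integral_finsetSum _ fun σ _ => integrable_gibbsWeight_mul hX (hY σ) σ

theorem hasDerivAt_integral_log_partitionFunction [Nonempty K] [IsFiniteMeasure P]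
    {Y : Ω → K → ℝ} (hX : ∀ σ, Integrable (fun ω => X ω σ) P)
    (hY : ∀ σ, Integrable (fun ω => Y ω σ) P) (t : ℝ) :
    HasDerivAt (fun s : ℝ => ∫ ω, log (partitionFunction (X ω + s • Y ω)) ∂P)
      (∫ ω, gibbsMean (X ω + t • Y ω) (Y ω) ∂P) t := by
  have hpath (s : ℝ) (σ : K) : Integrable (fun ω => (X ω + s • Y ω) σ) P :=
    (hX σ).add ((hY σ).const_mul s)
  have hmeas (s : ℝ) : AEMeasurable (fun ω => X ω + s • Y ω) P :=
    aemeasurable_pi_iff.2 fun σ => (hpath s σ).aemeasurable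
  have hlog (s : ℝ) :
      AEStronglyMeasurable (fun ω => log (partitionFunction (X ω + s • Y ω))) P :=
    (measurable_partitionFunction.log.comp_aemeasurable (hmeas s)).aestronglyMeasurable
  refine (hasDerivAt_integral_of_dominated_loc_of_deriv_le (s := Set.univ) univ_mem
    (F' := fun s ω => gibbsMean (X ω + s • Y ω) (Y ω)) (bound := fun ω => ∑ σ, |Y ω σ|)
    (.of_forall hlog) ?_ (integrable_gibbsMean (hmeas t) hY).aestronglyMeasurable
    (.of_forall fun ω s _ => abs_gibbsMean_le _ _)
    (integrable_finsetSum _ fun σ _ => (hY σ).abs)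
    (.of_forall fun ω s _ => hasDerivAt_log_partitionFunction _ _ s)).2
  exact ((integrable_const _).add (integrable_finsetSum _ fun σ _ => (hpath t σ).abs)).mono'
    (hlog t) (.of_forall fun ω => abs_log_partitionFunction_le _)

end FiniteGibbs

/-! ### Gaussian energies -/

section GaussianEnergy

open Function

lemma update_eq_update_zero_add_smul_single {ι R : Type*} [DecidableEq ι] [Semiring R]
    (f : ι → R) (i : ι) (x : R) : update f i x = update f i 0 + x • Pi.single i 1 := by
  ext k
  obtain rfl | hk := eq_or_ne k i
  · simp
  · simp [hk]

variable {K ι : Type*} [Fintype ι]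

/-- The energies `σ ↦ ⟨a σ, g⟩ + c σ` of a finite system with disorder `g`. For standard Gaussian
`g` they form a Gaussian process with mean `c` and covariance `a σ ⬝ᵥ a τ`. -/
def affineEnergy (a : K → ι → ℝ) (c : K → ℝ) (g : ι → ℝ) (σ : K) : ℝ := a σ ⬝ᵥ g + c σ

lemma affineEnergy_add_smul (a u : K → ι → ℝ) (c : K → ℝ) (t : ℝ) (g : ι → ℝ) :
    affineEnergy (a + t • u) c g = affineEnergy a c g + t • fun σ => u σ ⬝ᵥ g := by
  ext σ
  simp only [affineEnergy, Pi.add_apply, Pi.smul_apply, add_dotProduct, smul_dotProduct]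
  ring

lemma affineEnergy_update [DecidableEq ι] (a : K → ι → ℝ) (c : K → ℝ) (g : ι → ℝ) (j : ι) (x : ℝ) :
    affineEnergy a c (update g j x) = affineEnergy a c (update g j 0) + x • fun σ => a σ j := by
  ext σ
  rw [update_eq_update_zero_add_smul_single g j x]
  simp only [affineEnergy, Pi.add_apply, Pi.smul_apply, dotProduct_add, dotProduct_smul,
    dotProduct_single_one]
  ring

@[fun_prop]
lemma measurable_affineEnergy (a : K → ι → ℝ) (c : K → ℝ) : Measurable (affineEnergy a c) := by
  unfold affineEnergy dotProduct
  fun_prop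

lemma integrable_eval_stdGaussianPi (j : ι) :
    Integrable (fun g : ι → ℝ => g j) (stdGaussianPi ι) :=
  integrable_eval (memLp_one_iff_integrable.1 (memLp_id_gaussianReal 1))

lemma integrable_dotProduct_stdGaussianPi (v : ι → ℝ) :
    Integrable (fun g : ι → ℝ => v ⬝ᵥ g) (stdGaussianPi ι) :=
  integrable_finsetSum _ fun j _ => (integrable_eval_stdGaussianPi j).const_mul (v j)

variable [Fintype K]

lemma hasDerivAt_gibbsWeight_affineEnergy_update [DecidableEq ι] (a : K → ι → ℝ) (c : K → ℝ)
    (σ : K) (j : ι) (g : ι → ℝ) :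
    HasDerivAt (fun y => gibbsWeight (affineEnergy a c (update g j y)) σ)
      (gibbsWeight (affineEnergy a c g) σ *
        (a σ j - gibbsMean (affineEnergy a c g) fun τ => a τ j)) (g j) := by
  simpa only [← affineEnergy_update, update_eq_self] using
    hasDerivAt_gibbsWeight (affineEnergy a c (update g j 0)) (fun τ => a τ j) (g j) σ

lemma dotProduct_gibbsMean (E : K → ℝ) (a : K → ι → ℝ) (v : ι → ℝ) :
    (v ⬝ᵥ fun j => gibbsMean E fun τ => a τ j) = gibbsMean E fun τ => v ⬝ᵥ a τ := by
  simp only [dotProduct, ← gibbsMean_const_mul]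
  simp only [gibbsMean, Finset.mul_sum]
  exact Finset.sum_comm

theorem integral_gibbsWeight_mul_dotProduct (a : K → ι → ℝ) (c : K → ℝ) (v : ι → ℝ) (σ : K) :
    ∫ g, gibbsWeight (affineEnergy a c g) σ * (v ⬝ᵥ g) ∂stdGaussianPi ι
      = ∫ g, gibbsWeight (affineEnergy a c g) σ *
          (v ⬝ᵥ a σ - gibbsMean (affineEnergy a c g) fun τ => v ⬝ᵥ a τ) ∂stdGaussianPi ι := by
  classical
  have hE : AEMeasurable (affineEnergy a c) (stdGaussianPi ι) := by fun_prop
  have hparts := integral_dotProduct_mul_stdGaussianPi v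
    (hasDerivAt_gibbsWeight_affineEnergy_update a c σ)
    (by simpa only [mul_one] using integrable_gibbsWeight_mul hE (integrable_const 1) σ)
    (fun j => integrable_gibbsWeight_mul hE (integrable_const_sub_gibbsMean hE _ _) σ)
    (fun j => by
      simpa only [mul_comm] using
        integrable_gibbsWeight_mul hE (integrable_eval_stdGaussianPi j) σ)
  simp only [mul_comm (gibbsWeight _ σ) (v ⬝ᵥ _), hparts]
  congr with g
  rw [← dotProduct_gibbsMean, ← dotProduct_sub, ← smul_eq_mul, ← dotProduct_smul]
  rfl

theorem integral_gibbsMean_dotProduct (a u : K → ι → ℝ) (c : K → ℝ) :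
    ∫ g, gibbsMean (affineEnergy a c g) (fun σ => u σ ⬝ᵥ g) ∂stdGaussianPi ι
      = ∫ g, gibbsMean (affineEnergy a c g) (fun σ =>
          u σ ⬝ᵥ a σ - gibbsMean (affineEnergy a c g) fun τ => u σ ⬝ᵥ a τ) ∂stdGaussianPi ι := by
  have hE : AEMeasurable (affineEnergy a c) (stdGaussianPi ι) := by fun_prop
  rw [integral_gibbsMean hE fun σ => integrable_dotProduct_stdGaussianPi (u σ),
    integral_gibbsMean hE fun σ => integrable_const_sub_gibbsMean hE _ _]
  simp only [integral_gibbsWeight_mul_dotProduct]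

theorem hasDerivAt_integral_log_partitionFunction_affineEnergy [Nonempty K] (a u : K → ι → ℝ)
    (c : K → ℝ) (t : ℝ) :
    HasDerivAt
      (fun s : ℝ => ∫ g, log (partitionFunction (affineEnergy (a + s • u) c g)) ∂stdGaussianPi ι)
      (∫ g, gibbsMean (affineEnergy (a + t • u) c g) (fun σ => u σ ⬝ᵥ (a + t • u) σ -
        gibbsMean (affineEnergy (a + t • u) c g) fun τ => u σ ⬝ᵥ (a + t • u) τ)
          ∂stdGaussianPi ι) t := by
  rw [← integral_gibbsMean_dotProduct]
  simp only [affineEnergy_add_smul]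
  exact hasDerivAt_integral_log_partitionFunction
    (fun σ => (integrable_dotProduct_stdGaussianPi (a σ)).add (integrable_const (c σ)))
    (fun σ => integrable_dotProduct_stdGaussianPi (u σ)) t

end GaussianEnergy

/-! ### The mixed `p`-spin model -/

section MixedPSpin

variable {S : Finset ℕ} {N : ℕ}

/-- The coefficient vector of the disorder in the Hamiltonian: `H_N(σ) = couplings S N β σ ⬝ᵥ g`. -/
def couplings (S : Finset ℕ) (N : ℕ) (β : ℕ → ℝ) (σ : Fin N → Bool) (k : DisorderIdx S N) : ℝ :=
  β k.1 * ((N : ℝ) ^ (-((k.1 : ℝ) - 1) / 2) * ∏ j, spin (σ (k.2 j)))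

/-- The energy `h Σ_i σ_i` of a configuration in the external field. -/
def fieldEnergy (N : ℕ) (h : ℝ) (σ : Fin N → Bool) : ℝ := h * ∑ i, spin (σ i)

lemma energy_eq_affineEnergy (h : ℝ) (β : ℕ → ℝ) :
    energy S N h β = affineEnergy (couplings S N β) (fieldEnergy N h) := by
  ext g σ
  simp only [energy, hamiltonian, affineEnergy, fieldEnergy, couplings, dotProduct,
    Fintype.sum_sigma, Finset.mul_sum]
  congr! 3
  ring

lemma couplings_update (β : ℕ → ℝ) (p : ℕ) (t : ℝ) :
    couplings S N (Function.update β p t)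
      = couplings S N (Function.update β p 0) + t • couplings S N (Pi.single p 1) := by
  ext σ k
  rw [update_eq_update_zero_add_smul_single]
  simp only [couplings, Pi.add_apply, Pi.smul_apply, smul_eq_mul]
  ring

lemma rpow_neg_sub_one_half_mul_self {x : ℝ} (hx : 0 < x) (p : ℕ) :
    x ^ (-((p : ℝ) - 1) / 2) * x ^ (-((p : ℝ) - 1) / 2) = x * x⁻¹ ^ p := by
  rw [← rpow_add hx, show -((p : ℝ) - 1) / 2 + -((p : ℝ) - 1) / 2 = 1 + -(p : ℝ) by ring,
    rpow_add hx, rpow_one, rpow_neg hx.le, rpow_natCast, inv_pow]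

lemma sum_prod_mul_prod_eq_pow {ι R : Type*} [Fintype ι] [CommSemiring R] (a b : ι → R) (p : ℕ) :
    ∑ i : Fin p → ι, (∏ j, a (i j)) * ∏ j, b (i j) = (∑ i, a i * b i) ^ p := by
  simp only [← Finset.prod_mul_distrib]
  exact (Fintype.sum_pow (fun i => a i * b i) p).symm

theorem couplings_dotProduct_couplings (hN : 0 < N) (β β' : ℕ → ℝ) (σ τ : Fin N → Bool) :
    couplings S N β σ ⬝ᵥ couplings S N β' τ
      = N * ∑ p ∈ S, β p * β' p * overlap N σ τ ^ p := by
  rw [dotProduct, Fintype.sum_sigma, Finset.mul_sum, ← Finset.sum_coe_sort S]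
  refine Finset.sum_congr rfl fun p _ => ?_
  set c : ℝ := (N : ℝ) ^ (-(((p : ℕ) : ℝ) - 1) / 2)
  have hc : c * c = N * (N : ℝ)⁻¹ ^ (p : ℕ) :=
    rpow_neg_sub_one_half_mul_self (Nat.cast_pos.2 hN) p
  calc ∑ i : Fin p → Fin N, couplings S N β σ ⟨p, i⟩ * couplings S N β' τ ⟨p, i⟩
      = β p * β' p * (c * c) *
          ∑ i : Fin p → Fin N, (∏ j, spin (σ (i j))) * ∏ j, spin (τ (i j)) := by
        rw [Finset.mul_sum]
        refine Finset.sum_congr rfl fun i _ => ?_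
        simp only [couplings]
        ring
    _ = N * (β p * β' p * overlap N σ τ ^ (p : ℕ)) := by
        rw [sum_prod_mul_prod_eq_pow (fun i => spin (σ i)) (fun i => spin (τ i)), hc, overlap,
          mul_pow]
        ring

lemma couplings_single_dotProduct_couplings (hN : 0 < N) {p : ℕ} (hp : p ∈ S) (β : ℕ → ℝ)
    (σ τ : Fin N → Bool) :
    couplings S N (Pi.single p 1) σ ⬝ᵥ couplings S N β τ = N * β p * overlap N σ τ ^ p := by
  rw [couplings_dotProduct_couplings hN]
  simp [Pi.single_apply, hp, mul_assoc]

lemma overlap_self (hN : 0 < N) (σ : Fin N → Bool) : overlap N σ σ = 1 := by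
  have hspin (b : Bool) : spin b * spin b = 1 := by cases b <;> simp [spin]
  simp only [overlap, hspin, Finset.sum_const, Finset.card_univ, Fintype.card_fin, nsmul_eq_mul,
    mul_one]
  exact inv_mul_cancel₀ (Nat.cast_ne_zero.2 hN.ne')

lemma gibbsAvg2_eq_gibbsMean (h : ℝ) (β : ℕ → ℝ) (g : DisorderIdx S N → ℝ)
    (f : (Fin N → Bool) → (Fin N → Bool) → ℝ) :
    gibbsAvg2 S N h β g f
      = gibbsMean (energy S N h β g) fun σ => gibbsMean (energy S N h β g) (f σ) := by
  simp only [gibbsMean, Finset.mul_sum]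
  refine Finset.sum_congr rfl fun σ _ => Finset.sum_congr rfl fun τ _ => ?_
  rw [mul_comm (f σ τ), mul_assoc, mul_comm (f σ τ)]
  rfl

lemma integrable_gibbsAvg2 (h : ℝ) (β : ℕ → ℝ) (f : (Fin N → Bool) → (Fin N → Bool) → ℝ) :
    Integrable (fun g => gibbsAvg2 S N h β g f) (stdGaussianPi (DisorderIdx S N)) := by
  have hE : AEMeasurable (energy S N h β) (stdGaussianPi (DisorderIdx S N)) := by
    rw [energy_eq_affineEnergy]
    fun_prop
  simp only [gibbsAvg2_eq_gibbsMean]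
  exact integrable_gibbsMean hE fun σ => integrable_gibbsMean hE fun τ => integrable_const _

lemma integral_gibbsMean_sub_overlap_pow (h : ℝ) (β : ℕ → ℝ) (p : ℕ) (x : ℝ) :
    ∫ g, gibbsMean (energy S N h β g) (fun σ => x -
        gibbsMean (energy S N h β g) fun τ => x * overlap N σ τ ^ p)
        ∂stdGaussianPi (DisorderIdx S N)
      = x * (1 - overlapMoment S N h β p) := by
  simp only [gibbsMean_const_mul, gibbsMean_const_sub, ← gibbsAvg2_eq_gibbsMean]
  rw [integral_sub (integrable_const x) ((integrable_gibbsAvg2 h β _).const_mul x),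
    integral_const, integral_const_mul, probReal_univ, one_smul, mul_one_sub]
  rfl

end MixedPSpin

/-- For each `p ∈ S`, the partial derivative of `F_N` with respect to `β_p` exists and
equals `β_p (1 - E⟨R_{1,2}^p⟩)`. -/
theorem freeEnergy_hasDerivAt
    (S : Finset ℕ) (hS : ∀ p ∈ S, 0 < p) (N : ℕ) (hN : 1 ≤ N) (h : ℝ) (β : ℕ → ℝ)
    (p : ℕ) (hp : p ∈ S) :
    HasDerivAt (fun t : ℝ => freeEnergy S N h (Function.update β p t))
      (β p * (1 - overlapMoment S N h β p)) (β p) := by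
  have hN0 : (N : ℝ) ≠ 0 := by positivity
  have hderiv := hasDerivAt_integral_log_partitionFunction_affineEnergy
    (couplings S N (Function.update β p 0)) (couplings S N (Pi.single p 1)) (fieldEnergy N h) (β p)
  simp only [← couplings_update, ← energy_eq_affineEnergy, Function.update_eq_self,
    couplings_single_dotProduct_couplings hN hp, overlap_self hN, one_pow, mul_one,
    integral_gibbsMean_sub_overlap_pow] at hderiv
  exact (hderiv.const_mul (N : ℝ)⁻¹).congr_deriv (by field_simp)
end
end

section
/- For every B > 0 and every p ∈ S there exists L < ∞ such that for every k ≥ 1, every discrete order parameter (m,q) with at most k atoms, and every β ∈ ℝ^S with |β_r| ≤ B for all r ∈ S, the map β_p ↦ P(m,q;β) (with the other coordinates of β fixed) is twice differentiable and its second derivative is bounded in absolute value by L. -/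
open MeasureTheory ProbabilityTheory Real Filter Topology

noncomputable section

/-- The centered Gaussian measure on `ℝ` with variance `v` (Dirac at `0` if `v ≤ 0`). -/
def gauss (v : ℝ) : Measure ℝ := gaussianReal 0 v.toNNReal

/-- `ξ(x) = Σ_{p ∈ S} β_p^2 x^p`. -/
def xiFn (S : Finset ℕ) (β : ℕ → ℝ) (x : ℝ) : ℝ := ∑ p ∈ S, β p ^ 2 * x ^ p

/-- `ξ'(x) = Σ_{p ∈ S} β_p^2 p x^(p-1)`. -/
def xiFn' (S : Finset ℕ) (β : ℕ → ℝ) (x : ℝ) : ℝ := ∑ p ∈ S, β p ^ 2 * p * x ^ (p - 1)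

/-- `θ(x) = x ξ'(x) - ξ(x)`. -/
def thetaFn (S : Finset ℕ) (β : ℕ → ℝ) (x : ℝ) : ℝ := x * xiFn' S β x - xiFn S β x

/-- A discrete order parameter with at most `k` atoms:
`0 = m_0 ≤ m_1 ≤ ⋯ ≤ m_k = 1` with `m_l > 0` for `1 ≤ l ≤ k`,
and `0 = q_0 ≤ q_1 ≤ ⋯ ≤ q_k ≤ q_{k+1} = 1`. -/
structure OrderParam (k : ℕ) where
  m : ℕ → ℝ
  q : ℕ → ℝ
  m_zero : m 0 = 0
  m_last : m k = 1
  m_mono : ∀ l, l < k → m l ≤ m (l + 1)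
  m_pos : ∀ l, 1 ≤ l → l ≤ k → 0 < m l
  q_zero : q 0 = 0
  q_last : q (k + 1) = 1
  q_mono : ∀ l, l ≤ k → q l ≤ q (l + 1)

/-- The recursively defined functions of the Parisi functional:
`parisiB m v k j = A_{k-j}`, so `parisiB m v k 0 = A_k = log cosh` and
`parisiB m v k k = A_0`, where
`A_{l-1}(x) = (1/m_l) log ∫ exp (m_l A_l (x+y)) dγ_{v_l}(y)`. -/
def parisiB (m v : ℕ → ℝ) (k : ℕ) : ℕ → ℝ → ℝ
  | 0, x => Real.log (Real.cosh x)
  | j + 1, x =>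
      (1 / m (k - j)) *
        Real.log (∫ y, Real.exp (m (k - j) * parisiB m v k j (x + y)) ∂(gauss (v (k - j))))

/-- The variances `v_0 = ξ'(q_1)` and `v_l = ξ'(q_{l+1}) - ξ'(q_l)` for `l ≥ 1`. -/
def opVar (S : Finset ℕ) (β : ℕ → ℝ) {k : ℕ} (op : OrderParam k) : ℕ → ℝ := fun l =>
  if l = 0 then xiFn' S β (op.q 1) else xiFn' S β (op.q (l + 1)) - xiFn' S β (op.q l)

/-- The discrete Parisi functional
`P(m,q;β) = ∫ A_0(h+y) dγ_{v_0}(y) - (1/2) Σ_{1≤l≤k} m_l (θ(q_{l+1}) - θ(q_l))`. -/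
def parisiP (S : Finset ℕ) (h : ℝ) (β : ℕ → ℝ) {k : ℕ} (op : OrderParam k) : ℝ :=
  (∫ y, parisiB op.m (opVar S β op) k k (h + y) ∂(gauss (opVar S β op 0))) -
    (1 / 2) * ∑ l ∈ Finset.Icc 1 k, op.m l * (thetaFn S β (op.q (l + 1)) - thetaFn S β (op.q l))

/-- The Parisi formula: infimum over `k ≥ 1` and discrete order parameters with at
most `k` atoms. -/
def parisiF (S : Finset ℕ) (h : ℝ) (β : ℕ → ℝ) : ℝ :=
  sInf {x : ℝ | ∃ k : ℕ, 1 ≤ k ∧ ∃ op : OrderParam k, x = parisiP S h β op}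

/-!
Fix every coordinate of `β` except `t = β_p`. The Gaussian variances of the recursion are then
`a_l + c_l t ^ 2` with `∑ c_l ≤ p`, and it has to be shown that `u_tt` is bounded independently of
the number of steps `u ↦ m⁻¹ log 𝔼 exp (m u)`. Differentiating a step produces its tilted Gaussian
mean `M`, with density proportional to `exp (m u)`: along the recursion `u_x` is a martingale for
the means `M`, `u_t` has drift `c t M (u_xx + m u_x ^ 2)`, and `u_tt` has drift
`m M-Cov (u_t, u_t) + O(c)`. The `O(c)` terms add up because `∑ c_l ≤ p`. The covariances add up
because the accumulated variance of a bounded `f` with summable drift telescopes through `f ^ 2`,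
as for the quadratic variation of a bounded martingale.

The heat flow `∂_v 𝔼 f (x + √v Z) = 𝔼 f'' / 2` trades a parameter derivative for two space
derivatives, so `u_t` and `u_tt` require bounds on `u_x`, `u_xx`, …. These follow by induction on
the number of space derivatives: differentiating `M f` in space only adds covariances of `f` with
`u_x` to the drift, which are summable by the same telescoping.
-/

namespace Parisi

/-! ### Tame functions of a parameter and a space variable -/

/-- Functions `g t x` of a real parameter `t` and a real space variable `x`. -/
abbrev ParamFun := ℝ → ℝ → ℝ

/-- The partial derivative in the space variable, with the junk value of `deriv` where it
does not exist. -/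
def spaceDeriv (g : ParamFun) : ParamFun := fun t => deriv (g t)

/-- The partial derivative in the parameter, with the junk value of `deriv` where it does
not exist. -/
def paramDeriv (g : ParamFun) : ParamFun := fun t x => deriv (fun s => g s x) t

local notation "∂ₓ" => spaceDeriv
local notation "∂ₜ" => paramDeriv

/-- Exponential growth in the space variable, locally uniformly in the parameter. -/
def HasExpGrowth (g : ParamFun) : Prop :=
  ∀ T : ℝ, ∃ C K : ℝ, 0 ≤ C ∧ 0 ≤ K ∧ ∀ t x, |t| ≤ T → |g t x| ≤ C * exp (K * |x|)

/-- Jointly continuous functions of exponential growth: those which may be averaged over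
Gaussian translations of the space variable. -/
structure IsControlled (g : ParamFun) : Prop where
  continuous : Continuous fun z : ℝ × ℝ => g z.1 z.2
  growth : HasExpGrowth g

/-- The mixed partial derivatives of `g` of order less than `n` are differentiable in each
variable, and those of order at most `n` are controlled. -/
def TameUpTo : ℕ → ParamFun → Prop
  | 0, g => IsControlled g
  | n + 1, g => IsControlled g ∧ (∀ t x, DifferentiableAt ℝ (g t) x) ∧
      (∀ t x, DifferentiableAt ℝ (fun s => g s x) t) ∧ TameUpTo n (∂ₓ g) ∧ TameUpTo n (∂ₜ g)

/-- Smooth functions all of whose mixed partial derivatives are controlled. -/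
def Tame (g : ParamFun) : Prop := ∀ n, TameUpTo n g

section Calculus

variable {n : ℕ} {f g gx gt : ParamFun}

theorem spaceDeriv_eq (h : ∀ t x, HasDerivAt (g t) (gx t x) x) : ∂ₓ g = gx := by
  funext t x; exact (h t x).deriv

theorem paramDeriv_eq (h : ∀ t x, HasDerivAt (fun s => g s x) (gt t x) t) : ∂ₜ g = gt := by
  funext t x; exact (h t x).deriv

theorem TameUpTo.isControlled (h : TameUpTo n g) : IsControlled g := by
  cases n with
  | zero => exact h
  | succ n => exact h.1

theorem TameUpTo.of_succ : ∀ {g : ParamFun}, TameUpTo (n + 1) g → TameUpTo n g := by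
  induction n with
  | zero => exact fun h => h.1
  | succ n ih => exact fun ⟨hb, hx, ht, hgx, hgt⟩ => ⟨hb, hx, ht, ih hgx, ih hgt⟩

theorem TameUpTo.of_hasDerivAt (hg : IsControlled g) (hx : ∀ t x, HasDerivAt (g t) (gx t x) x)
    (ht : ∀ t x, HasDerivAt (fun s => g s x) (gt t x) t) (hgx : TameUpTo n gx)
    (hgt : TameUpTo n gt) : TameUpTo (n + 1) g :=
  ⟨hg, fun t x => (hx t x).differentiableAt, fun t x => (ht t x).differentiableAt,
    by rwa [spaceDeriv_eq hx], by rwa [paramDeriv_eq ht]⟩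

theorem TameUpTo.spaceDeriv (h : TameUpTo (n + 1) g) : TameUpTo n (∂ₓ g) := h.2.2.2.1

theorem TameUpTo.paramDeriv (h : TameUpTo (n + 1) g) : TameUpTo n (∂ₜ g) := h.2.2.2.2

theorem TameUpTo.hasDerivAt_space (h : TameUpTo (n + 1) g) (t x : ℝ) :
    HasDerivAt (g t) (∂ₓ g t x) x := (h.2.1 t x).hasDerivAt

theorem TameUpTo.hasDerivAt_param (h : TameUpTo (n + 1) g) (t x : ℝ) :
    HasDerivAt (fun s => g s x) (∂ₜ g t x) t := (h.2.2.1 t x).hasDerivAt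

theorem Tame.isControlled (h : Tame g) : IsControlled g := h 0

theorem Tame.spaceDeriv (h : Tame g) : Tame (∂ₓ g) := fun n => (h (n + 1)).spaceDeriv

theorem Tame.paramDeriv (h : Tame g) : Tame (∂ₜ g) := fun n => (h (n + 1)).paramDeriv

theorem Tame.hasDerivAt_space (h : Tame g) (t x : ℝ) : HasDerivAt (g t) (∂ₓ g t x) x :=
  (h 1).hasDerivAt_space t x

theorem Tame.hasDerivAt_param (h : Tame g) (t x : ℝ) :
    HasDerivAt (fun s => g s x) (∂ₜ g t x) t := (h 1).hasDerivAt_param t x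

theorem IsControlled.continuous_space (h : IsControlled g) (t : ℝ) : Continuous (g t) :=
  h.continuous.comp (Continuous.prodMk_right t)

theorem HasExpGrowth.add (hf : HasExpGrowth f) (hg : HasExpGrowth g) :
    HasExpGrowth (f + g) := by
  intro T
  obtain ⟨C, K, hC, hK, hf⟩ := hf T
  obtain ⟨C', K', hC', hK', hg⟩ := hg T
  refine ⟨C + C', K + K', by positivity, by positivity, fun t x ht => ?_⟩
  calc |f t x + g t x| ≤ |f t x| + |g t x| := abs_add_le _ _
    _ ≤ C * exp (K * |x|) + C' * exp (K' * |x|) := add_le_add (hf t x ht) (hg t x ht)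
    _ ≤ C * exp ((K + K') * |x|) + C' * exp ((K + K') * |x|) := by gcongr <;> linarith
    _ = (C + C') * exp ((K + K') * |x|) := by ring

theorem HasExpGrowth.mul (hf : HasExpGrowth f) (hg : HasExpGrowth g) :
    HasExpGrowth (f * g) := by
  intro T
  obtain ⟨C, K, hC, hK, hf⟩ := hf T
  obtain ⟨C', K', hC', hK', hg⟩ := hg T
  refine ⟨C * C', K + K', by positivity, by positivity, fun t x ht => ?_⟩
  calc |f t x * g t x| = |f t x| * |g t x| := abs_mul _ _
    _ ≤ (C * exp (K * |x|)) * (C' * exp (K' * |x|)) :=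
        mul_le_mul (hf t x ht) (hg t x ht) (abs_nonneg _) (by positivity)
    _ = C * C' * exp ((K + K') * |x|) := by rw [add_mul, Real.exp_add]; ring

theorem HasExpGrowth.of_abs_le (hg : HasExpGrowth g) (h : ∀ t x, |f t x| ≤ |g t x|) :
    HasExpGrowth f := by
  intro T
  obtain ⟨C, K, hC, hK, hg⟩ := hg T
  exact ⟨C, K, hC, hK, fun t x ht => (h t x).trans (hg t x ht)⟩

theorem HasExpGrowth.of_bounded (C : ℝ) (h : ∀ t x, |f t x| ≤ C) : HasExpGrowth f :=
  fun _ => ⟨C, 0, (abs_nonneg _).trans (h 0 0), le_rfl, fun t x _ => by simpa using h t x⟩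

theorem IsControlled.add (hf : IsControlled f) (hg : IsControlled g) : IsControlled (f + g) :=
  ⟨hf.continuous.add hg.continuous, hf.growth.add hg.growth⟩

theorem IsControlled.mul (hf : IsControlled f) (hg : IsControlled g) : IsControlled (f * g) :=
  ⟨hf.continuous.mul hg.continuous, hf.growth.mul hg.growth⟩

theorem TameUpTo.add : ∀ {f g : ParamFun}, TameUpTo n f → TameUpTo n g → TameUpTo n (f + g) := by
  induction n with
  | zero => exact IsControlled.add
  | succ n ih =>
    exact fun hf hg => .of_hasDerivAt (hf.isControlled.add hg.isControlled)
      (fun t x => (hf.hasDerivAt_space t x).add (hg.hasDerivAt_space t x))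
      (fun t x => (hf.hasDerivAt_param t x).add (hg.hasDerivAt_param t x))
      (ih hf.spaceDeriv hg.spaceDeriv) (ih hf.paramDeriv hg.paramDeriv)

theorem TameUpTo.mul : ∀ {f g : ParamFun}, TameUpTo n f → TameUpTo n g → TameUpTo n (f * g) := by
  induction n with
  | zero => exact IsControlled.mul
  | succ n ih =>
    intro f g hf hg
    exact .of_hasDerivAt (gx := ∂ₓ f * g + f * ∂ₓ g) (gt := ∂ₜ f * g + f * ∂ₜ g)
      (hf.isControlled.mul hg.isControlled)
      (fun t x => (hf.hasDerivAt_space t x).mul (hg.hasDerivAt_space t x))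
      (fun t x => (hf.hasDerivAt_param t x).mul (hg.hasDerivAt_param t x))
      ((ih hf.spaceDeriv hg.of_succ).add (ih hf.of_succ hg.spaceDeriv))
      ((ih hf.paramDeriv hg.of_succ).add (ih hf.of_succ hg.paramDeriv))

/-- The constant functions. -/
def const (c : ℝ) : ParamFun := fun _ _ => c

/-- The parameter itself, as a function of the parameter and the space variable. -/
def param : ParamFun := fun t _ => t

theorem spaceDeriv_const (c : ℝ) : ∂ₓ (const c) = 0 :=
  spaceDeriv_eq fun _ x => hasDerivAt_const x c

theorem paramDeriv_const (c : ℝ) : ∂ₜ (const c) = 0 :=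
  paramDeriv_eq fun t _ => hasDerivAt_const t c

theorem spaceDeriv_one : ∂ₓ 1 = 0 := spaceDeriv_const 1

theorem paramDeriv_one : ∂ₜ 1 = 0 := paramDeriv_const 1

theorem spaceDeriv_param : ∂ₓ param = 0 := spaceDeriv_eq fun t x => hasDerivAt_const x t

theorem paramDeriv_param : ∂ₜ param = 1 := paramDeriv_eq fun t _ => hasDerivAt_id t

theorem IsControlled.const (c : ℝ) : IsControlled (const c) :=
  ⟨continuous_const, .of_bounded |c| fun _ _ => le_rfl⟩

theorem Tame.const (c : ℝ) : Tame (const c) := by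
  intro n
  induction n generalizing c with
  | zero => exact .const c
  | succ n ih =>
    exact .of_hasDerivAt (.const c) (fun _ x => hasDerivAt_const x c)
      (fun t _ => hasDerivAt_const t c) (ih 0) (ih 0)

theorem Tame.one : Tame 1 := .const 1

theorem IsControlled.param : IsControlled param := by
  refine ⟨continuous_fst, fun T => ⟨|T|, 0, abs_nonneg _, le_rfl, fun t x h => ?_⟩⟩
  simpa [Parisi.param] using h.trans (le_abs_self T)

theorem Tame.param : Tame param := by
  intro n
  cases n with
  | zero => exact .param
  | succ n =>
    exact .of_hasDerivAt .param (fun t x => hasDerivAt_const x t) (fun t _ => hasDerivAt_id t)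
      (Tame.const 0 n) (Tame.const 1 n)

theorem Tame.add (hf : Tame f) (hg : Tame g) : Tame (f + g) := fun n => (hf n).add (hg n)

theorem Tame.mul (hf : Tame f) (hg : Tame g) : Tame (f * g) := fun n => (hf n).mul (hg n)

theorem Tame.neg (hf : Tame f) : Tame (-f) := by
  have : -f = Parisi.const (-1) * f := by funext t x; simp [Parisi.const]
  exact this ▸ (Tame.const _).mul hf

theorem spaceDeriv_add (hf : Tame f) (hg : Tame g) : ∂ₓ (f + g) = ∂ₓ f + ∂ₓ g :=
  spaceDeriv_eq fun t x => (hf.hasDerivAt_space t x).add (hg.hasDerivAt_space t x)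

theorem paramDeriv_add (hf : Tame f) (hg : Tame g) : ∂ₜ (f + g) = ∂ₜ f + ∂ₜ g :=
  paramDeriv_eq fun t x => (hf.hasDerivAt_param t x).add (hg.hasDerivAt_param t x)

theorem spaceDeriv_mul (hf : Tame f) (hg : Tame g) : ∂ₓ (f * g) = ∂ₓ f * g + f * ∂ₓ g :=
  spaceDeriv_eq fun t x => (hf.hasDerivAt_space t x).mul (hg.hasDerivAt_space t x)

theorem paramDeriv_mul (hf : Tame f) (hg : Tame g) : ∂ₜ (f * g) = ∂ₜ f * g + f * ∂ₜ g :=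
  paramDeriv_eq fun t x => (hf.hasDerivAt_param t x).mul (hg.hasDerivAt_param t x)

theorem spaceDeriv_const_mul (c : ℝ) (hf : Tame f) : ∂ₓ (const c * f) = const c * ∂ₓ f := by
  rw [spaceDeriv_mul (.const c) hf, spaceDeriv_const, zero_mul, zero_add]

theorem paramDeriv_const_mul (c : ℝ) (hf : Tame f) : ∂ₜ (const c * f) = const c * ∂ₜ f := by
  rw [paramDeriv_mul (.const c) hf, paramDeriv_const, zero_mul, zero_add]

theorem Tame.exp (hf : Tame f) (hg : HasExpGrowth fun t x => exp (f t x)) :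
    Tame fun t x => Real.exp (f t x) := by
  have hb : IsControlled fun t x => Real.exp (f t x) :=
    ⟨Real.continuous_exp.comp hf.isControlled.continuous, hg⟩
  intro n
  induction n with
  | zero => exact hb
  | succ n ih =>
    exact .of_hasDerivAt hb (fun t x => (hf.hasDerivAt_space t x).exp)
      (fun t x => (hf.hasDerivAt_param t x).exp) (ih.mul (hf.spaceDeriv n))
      (ih.mul (hf.paramDeriv n))

theorem spaceDeriv_exp (hf : Tame f) :
    ∂ₓ (fun t x => exp (f t x)) = (fun t x => exp (f t x)) * ∂ₓ f :=
  spaceDeriv_eq fun t x => (hf.hasDerivAt_space t x).exp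

theorem paramDeriv_exp (hf : Tame f) :
    ∂ₜ (fun t x => exp (f t x)) = (fun t x => exp (f t x)) * ∂ₜ f :=
  paramDeriv_eq fun t x => (hf.hasDerivAt_param t x).exp

theorem hasDerivAt_space_inv (hf : Tame f) (h0 : ∀ t x, f t x ≠ 0) (t x : ℝ) :
    HasDerivAt (f⁻¹ t) ((-∂ₓ f * (f⁻¹ * f⁻¹)) t x) x := by
  refine ((hf.hasDerivAt_space t x).inv (h0 t x)).congr_deriv ?_
  simp only [Pi.mul_apply, Pi.neg_apply, Pi.inv_apply]
  field_simp

theorem hasDerivAt_param_inv (hf : Tame f) (h0 : ∀ t x, f t x ≠ 0) (t x : ℝ) :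
    HasDerivAt (fun s => f⁻¹ s x) ((-∂ₜ f * (f⁻¹ * f⁻¹)) t x) t := by
  refine ((hf.hasDerivAt_param t x).inv (h0 t x)).congr_deriv ?_
  simp only [Pi.mul_apply, Pi.neg_apply, Pi.inv_apply]
  field_simp

theorem spaceDeriv_inv (hf : Tame f) (h0 : ∀ t x, f t x ≠ 0) :
    ∂ₓ f⁻¹ = -∂ₓ f * (f⁻¹ * f⁻¹) := spaceDeriv_eq (hasDerivAt_space_inv hf h0)

theorem paramDeriv_inv (hf : Tame f) (h0 : ∀ t x, f t x ≠ 0) :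
    ∂ₜ f⁻¹ = -∂ₜ f * (f⁻¹ * f⁻¹) := paramDeriv_eq (hasDerivAt_param_inv hf h0)

theorem IsControlled.inv (hf : IsControlled f) (h1 : ∀ t x, 1 ≤ f t x) : IsControlled f⁻¹ := by
  have hpos : ∀ t x, 0 < f t x := fun t x => one_pos.trans_le (h1 t x)
  refine ⟨hf.continuous.inv₀ fun z => (hpos z.1 z.2).ne', .of_bounded 1 fun t x => ?_⟩
  simpa [abs_of_pos (hpos t x)] using inv_le_one_of_one_le₀ (h1 t x)

theorem Tame.inv (hf : Tame f) (h1 : ∀ t x, 1 ≤ f t x) : Tame f⁻¹ := by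
  have h0 : ∀ t x, f t x ≠ 0 := fun t x => (one_pos.trans_le (h1 t x)).ne'
  intro n
  induction n with
  | zero => exact hf.isControlled.inv h1
  | succ n ih =>
    exact .of_hasDerivAt (hf.isControlled.inv h1) (hasDerivAt_space_inv hf h0)
      (hasDerivAt_param_inv hf h0) ((hf.spaceDeriv.neg n).mul (ih.mul ih))
      ((hf.paramDeriv.neg n).mul (ih.mul ih))

theorem hasDerivAt_space_log (hf : Tame f) (h0 : ∀ t x, f t x ≠ 0) (t x : ℝ) :
    HasDerivAt (fun y => log (f t y)) ((∂ₓ f * f⁻¹) t x) x :=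
  (hf.hasDerivAt_space t x).log (h0 t x)

theorem hasDerivAt_param_log (hf : Tame f) (h0 : ∀ t x, f t x ≠ 0) (t x : ℝ) :
    HasDerivAt (fun s => log (f s x)) ((∂ₜ f * f⁻¹) t x) t :=
  (hf.hasDerivAt_param t x).log (h0 t x)

theorem Tame.log (hf : Tame f) (h1 : ∀ t x, 1 ≤ f t x) : Tame fun t x => log (f t x) := by
  have h0 : ∀ t x, f t x ≠ 0 := fun t x => (one_pos.trans_le (h1 t x)).ne'
  have hb : IsControlled fun t x => Real.log (f t x) := by
    refine ⟨hf.isControlled.continuous.log fun z => h0 z.1 z.2,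
      hf.isControlled.growth.of_abs_le fun t x => ?_⟩
    have hpos : 0 ≤ f t x := zero_le_one.trans (h1 t x)
    rw [abs_of_nonneg (Real.log_nonneg (h1 t x)), abs_of_nonneg hpos]
    exact Real.log_le_self hpos
  intro n
  cases n with
  | zero => exact hb
  | succ n =>
    exact .of_hasDerivAt hb (hasDerivAt_space_log hf h0) (hasDerivAt_param_log hf h0)
      ((hf.spaceDeriv n).mul (hf.inv h1 n)) ((hf.paramDeriv n).mul (hf.inv h1 n))

theorem spaceDeriv_log (hf : Tame f) (h0 : ∀ t x, f t x ≠ 0) :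
    ∂ₓ (fun t x => log (f t x)) = ∂ₓ f * f⁻¹ := spaceDeriv_eq (hasDerivAt_space_log hf h0)

theorem paramDeriv_log (hf : Tame f) (h0 : ∀ t x, f t x ≠ 0) :
    ∂ₜ (fun t x => log (f t x)) = ∂ₜ f * f⁻¹ := paramDeriv_eq (hasDerivAt_param_log hf h0)

theorem Tame.hasFDerivAt (hg : Tame g) (z : ℝ × ℝ) :
    HasFDerivAt (fun z : ℝ × ℝ => g z.1 z.2)
      (∂ₜ g z.1 z.2 • ContinuousLinearMap.fst ℝ ℝ ℝ +
        ∂ₓ g z.1 z.2 • ContinuousLinearMap.snd ℝ ℝ ℝ) z := by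
  have hcont : Continuous (ContinuousLinearMap.smulRightL ℝ ℝ ℝ 1) :=
    (ContinuousLinearMap.smulRightL ℝ ℝ ℝ 1).continuous
  have h := hasStrictFDerivAt_uncurry_coprod (𝕜 := ℝ) (u := z) (f := g)
    (f₁ := fun t x => (1 : ℝ →L[ℝ] ℝ).smulRight (∂ₜ g t x))
    (f₂ := fun t x => (1 : ℝ →L[ℝ] ℝ).smulRight (∂ₓ g t x))
    (.of_forall fun v => (hg.hasDerivAt_param v.1 v.2).hasFDerivAt)
    (.of_forall fun v => (hg.hasDerivAt_space v.1 v.2).hasFDerivAt)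
    (hcont.comp hg.paramDeriv.isControlled.continuous).continuousAt
    (hcont.comp hg.spaceDeriv.isControlled.continuous).continuousAt
  refine h.hasFDerivAt.congr_fderiv ?_
  ext <;> simp [Function.HasUncurry.uncurry]

theorem Tame.hasDerivAt_comp (hg : Tame g) {a b : ℝ → ℝ} {a' b' s : ℝ}
    (ha : HasDerivAt a a' s) (hb : HasDerivAt b b' s) :
    HasDerivAt (fun s => g (a s) (b s)) (a' * ∂ₜ g (a s) (b s) + b' * ∂ₓ g (a s) (b s)) s := by
  refine ((hg.hasFDerivAt (a s, b s)).comp_hasDerivAt s (ha.prodMk hb)).congr_deriv ?_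
  simp [mul_comm]

theorem spaceDeriv_paramDeriv_comm (hg : Tame g) : ∂ₓ (∂ₜ g) = ∂ₜ (∂ₓ g) := by
  funext t x
  have hfst := (hg.paramDeriv.hasFDerivAt (t, x)).smul_const (ContinuousLinearMap.fst ℝ ℝ ℝ)
  have hsnd := (hg.spaceDeriv.hasFDerivAt (t, x)).smul_const (ContinuousLinearMap.snd ℝ ℝ ℝ)
  have h := second_derivative_symmetric hg.hasFDerivAt (hfst.add hsnd) (0, 1) (1, 0)
  simpa using h

end Calculus

/-! ### Gaussian averages -/

section Gaussian

variable {μ : ℝ} {v : NNReal} {f f' : ℝ → ℝ}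

theorem integrable_exp_mul_abs_gaussianReal (k : ℝ) :
    Integrable (fun z => exp (k * |z|)) (gaussianReal μ v) :=
  integrable_exp_mul_abs (X := fun z => z) (integrable_exp_mul_gaussianReal k)
    (integrable_exp_mul_gaussianReal (-k))

theorem integrable_gaussianReal_of_abs_le_exp (hf : Continuous f) {C K : ℝ}
    (h : ∀ z, |f z| ≤ C * exp (K * |z|)) : Integrable f (gaussianReal μ v) :=
  ((integrable_exp_mul_abs_gaussianReal K).const_mul C).mono' hf.aestronglyMeasurable
    (.of_forall h)

theorem integrable_gaussianPDFReal_mul (hv : v ≠ 0) (hf : Integrable f (gaussianReal μ v)) :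
    Integrable fun z => gaussianPDFReal μ v z * f z := by
  rw [gaussianReal_of_var_ne_zero μ hv, integrable_withDensity_iff_integrable_smul'
    (measurable_gaussianPDF μ v) (.of_forall fun _ => gaussianPDF_lt_top)] at hf
  simpa only [toReal_gaussianPDF, smul_eq_mul] using hf

theorem hasDerivAt_gaussianPDFReal (μ : ℝ) (v : NNReal) (x : ℝ) :
    HasDerivAt (gaussianPDFReal μ v) (-((x - μ) / v) * gaussianPDFReal μ v x) x := by
  have h : HasDerivAt (fun y : ℝ => -(y - μ) ^ 2 / (2 * v)) (-((x - μ) / v)) x := by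
    refine (((hasDerivAt_id x).sub_const μ).pow 2).neg.div_const (2 * (v : ℝ)) |>.congr_deriv ?_
    simp only [id, Nat.cast_ofNat, Nat.add_one_sub_one, pow_one, mul_one, neg_div]
    rw [mul_div_mul_left _ _ two_ne_zero]
  rw [gaussianPDFReal_def]
  exact (h.exp.const_mul _).congr_deriv (by ring)

theorem integral_sub_mul_gaussianReal (hd : ∀ z, HasDerivAt f (f' z) z)
    (hf : Integrable f (gaussianReal μ v)) (hf' : Integrable f' (gaussianReal μ v))
    (hzf : Integrable (fun z => (z - μ) * f z) (gaussianReal μ v)) :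
    ∫ z, (z - μ) * f z ∂gaussianReal μ v = v * ∫ z, f' z ∂gaussianReal μ v := by
  obtain rfl | hv := eq_or_ne v 0
  · simp [gaussianReal_zero_var]
  have hv' : (v : ℝ) ≠ 0 := NNReal.coe_ne_zero.2 hv
  have hparts := integral_mul_deriv_eq_deriv_mul_of_integrable (u := gaussianPDFReal μ v)
    (u' := fun z => -((z - μ) / v) * gaussianPDFReal μ v z) (v := f) (v' := f')
    (fun z _ => hasDerivAt_gaussianPDFReal μ v z) (fun z _ => hd z)
    (integrable_gaussianPDFReal_mul hv hf') ?_ (integrable_gaussianPDFReal_mul hv hf)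
  · rw [integral_gaussianReal_eq_integral_smul hv, integral_gaussianReal_eq_integral_smul hv]
    simp only [smul_eq_mul]
    rw [hparts, ← integral_neg, ← integral_const_mul]
    congr 1 with z
    field_simp
  · refine ((integrable_gaussianPDFReal_mul hv hzf).const_mul (-(v : ℝ)⁻¹)).congr
      (.of_forall fun z => ?_)
    simp only [Pi.mul_apply]
    field_simp

end Gaussian

/-- The average of `g` over a centered Gaussian translation of the space variable with
standard deviation `|σ t|`. -/
def scaledAvg (σ : ℝ → ℝ) (g : ParamFun) : ParamFun :=
  fun t x => ∫ z, g t (x + σ t * z) ∂gaussianReal 0 1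

section ScaledAvg

variable {g : ParamFun} {σ : ℝ → ℝ}

theorem HasExpGrowth.comp_add_mul (hg : HasExpGrowth g) (hσ : Continuous σ) (T : ℝ) :
    ∃ C K L : ℝ, 0 ≤ C ∧ 0 ≤ K ∧ ∀ t x z, |t| ≤ T →
      |g t (x + σ t * z)| ≤ C * exp (K * |x|) * exp (L * |z|) := by
  obtain ⟨C, K, hC, hK, h⟩ := hg T
  obtain ⟨R, hR⟩ := (isCompact_Icc (a := -T) (b := T)).exists_bound_of_continuousOn
    hσ.continuousOn
  refine ⟨C, K, K * R, hC, hK, fun t x z ht => (h t _ ht).trans ?_⟩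
  have hadd : |x + σ t * z| ≤ |x| + R * |z| := by
    grw [abs_add_le, abs_mul, ← hR t (abs_le.1 ht), norm_eq_abs]
  calc C * exp (K * |x + σ t * z|) ≤ C * exp (K * (|x| + R * |z|)) := by gcongr
    _ = C * exp (K * |x|) * exp (K * R * |z|) := by
        rw [mul_add, Real.exp_add, ← mul_assoc, ← mul_assoc]

theorem HasExpGrowth.exists_abs_comp_add_mul_le (hg : HasExpGrowth g) (hσ : Continuous σ)
    (T X : ℝ) : ∃ C L : ℝ, 0 ≤ C ∧ ∀ t x z, |t| ≤ T → |x| ≤ X →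
      |g t (x + σ t * z)| ≤ C * exp (L * |z|) := by
  obtain ⟨C, K, L, hC, hK, h⟩ := hg.comp_add_mul hσ T
  refine ⟨C * exp (K * X), L, by positivity, fun t x z ht hx => (h t x z ht).trans ?_⟩
  gcongr

theorem eventually_abs_le_abs_add_one (x : ℝ) : ∀ᶠ y in 𝓝 x, |y| ≤ |x| + 1 :=
  (continuous_abs.tendsto x).eventually_le_const (lt_add_one _)

theorem IsControlled.continuous_comp_add_mul (hg : IsControlled g) (σ : ℝ → ℝ) (t x : ℝ) :
    Continuous fun z => g t (x + σ t * z) :=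
  (hg.continuous_space t).comp (by fun_prop)

theorem IsControlled.integrable_comp_add_mul (hg : IsControlled g) (hσ : Continuous σ)
    (t x : ℝ) : Integrable (fun z => g t (x + σ t * z)) (gaussianReal 0 1) := by
  obtain ⟨C, L, _, h⟩ := hg.growth.exists_abs_comp_add_mul_le hσ |t| |x|
  exact integrable_gaussianReal_of_abs_le_exp (hg.continuous_comp_add_mul σ t x)
    fun z => h t x z le_rfl le_rfl

theorem IsControlled.continuous_scaledAvg (hg : IsControlled g) (hσ : Continuous σ) :
    Continuous fun w : ℝ × ℝ => scaledAvg σ g w.1 w.2 := by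
  refine continuous_iff_continuousAt.2 fun w₀ => ?_
  obtain ⟨C, L, _, h⟩ := hg.growth.exists_abs_comp_add_mul_le hσ (|w₀.1| + 1) (|w₀.2| + 1)
  refine continuousAt_of_dominated (bound := fun z => C * exp (L * |z|))
    (.of_forall fun w => (hg.continuous_comp_add_mul σ w.1 w.2).aestronglyMeasurable) ?_
    ((integrable_exp_mul_abs_gaussianReal L).const_mul C) (.of_forall fun z => ?_)
  · filter_upwards [continuousAt_fst.eventually (eventually_abs_le_abs_add_one w₀.1),
      continuousAt_snd.eventually (eventually_abs_le_abs_add_one w₀.2)] with w hw₁ hw₂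
    exact .of_forall fun z => h w.1 w.2 z hw₁ hw₂
  · exact (hg.continuous.comp (f := fun w : ℝ × ℝ => (w.1, w.2 + σ w.1 * z))
      (by fun_prop)).continuousAt

theorem IsControlled.scaledAvg (hg : IsControlled g) (hσ : Continuous σ) :
    IsControlled (scaledAvg σ g) := by
  refine ⟨hg.continuous_scaledAvg hσ, fun T => ?_⟩
  obtain ⟨C, K, L, hC, hK, h⟩ := hg.growth.comp_add_mul hσ T
  refine ⟨C * ∫ z, exp (L * |z|) ∂gaussianReal 0 1, K, by positivity, hK, fun t x ht => ?_⟩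
  calc |Parisi.scaledAvg σ g t x|
      ≤ ∫ z, |g t (x + σ t * z)| ∂gaussianReal 0 1 := abs_integral_le_integral_abs
    _ ≤ ∫ z, C * exp (K * |x|) * exp (L * |z|) ∂gaussianReal 0 1 :=
        integral_mono (hg.integrable_comp_add_mul hσ t x).abs
          ((integrable_exp_mul_abs_gaussianReal L).const_mul _) fun z => h t x z ht
    _ = C * (∫ z, exp (L * |z|) ∂gaussianReal 0 1) * exp (K * |x|) := by
        rw [integral_const_mul]; ring

theorem hasDerivAt_space_scaledAvg (hg : Tame g) (hσ : Continuous σ) (t x : ℝ) :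
    HasDerivAt (scaledAvg σ g t) (scaledAvg σ (∂ₓ g) t x) x := by
  obtain ⟨C, L, _, h⟩ :=
    hg.spaceDeriv.isControlled.growth.exists_abs_comp_add_mul_le hσ |t| (|x| + 1)
  exact (hasDerivAt_integral_of_dominated_loc_of_deriv_le (𝕜 := ℝ) (μ := gaussianReal 0 1)
    (F := fun y z => g t (y + σ t * z)) (F' := fun y z => ∂ₓ g t (y + σ t * z))
    (bound := fun z => C * exp (L * |z|)) (eventually_abs_le_abs_add_one x)
    (.of_forall fun y => (hg.isControlled.continuous_comp_add_mul σ t y).aestronglyMeasurable)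
    (hg.isControlled.integrable_comp_add_mul hσ t x)
    (hg.spaceDeriv.isControlled.continuous_comp_add_mul σ t x).aestronglyMeasurable
    (.of_forall fun z y hy => h t y z le_rfl hy)
    ((integrable_exp_mul_abs_gaussianReal L).const_mul C)
    (.of_forall fun z y _ => (hg.hasDerivAt_space t _).comp_add_const y _)).2

theorem HasExpGrowth.exists_abs_mul_comp_add_mul_le (hg : HasExpGrowth g) (hσ : Continuous σ)
    (T X : ℝ) : ∃ C L : ℝ, ∀ t x z, |t| ≤ T → |x| ≤ X →
      |z * g t (x + σ t * z)| ≤ C * exp (L * |z|) := by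
  obtain ⟨C, L, _, h⟩ := hg.exists_abs_comp_add_mul_le hσ T X
  refine ⟨C, L + 1, fun t x z ht hx => ?_⟩
  have hz : |z| ≤ exp |z| := by linarith [Real.add_one_le_exp |z|]
  calc |z * g t (x + σ t * z)| = |z| * |g t (x + σ t * z)| := abs_mul _ _
    _ ≤ exp |z| * (C * exp (L * |z|)) :=
        mul_le_mul hz (h t x z ht hx) (abs_nonneg _) (by positivity)
    _ = C * exp ((L + 1) * |z|) := by rw [add_mul, one_mul, Real.exp_add]; ring

theorem IsControlled.integrable_mul_comp_add_mul (hg : IsControlled g) (hσ : Continuous σ)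
    (t x : ℝ) : Integrable (fun z => z * g t (x + σ t * z)) (gaussianReal 0 1) := by
  obtain ⟨C, L, h⟩ := hg.growth.exists_abs_mul_comp_add_mul_le hσ |t| |x|
  exact integrable_gaussianReal_of_abs_le_exp
    (continuous_id.mul (hg.continuous_comp_add_mul σ t x)) fun z => h t x z le_rfl le_rfl

theorem integral_mul_comp_add_mul (hg : Tame g) (hσ : Continuous σ) (t x : ℝ) :
    ∫ z, z * g t (x + σ t * z) ∂gaussianReal 0 1 = σ t * scaledAvg σ (∂ₓ g) t x := by
  have hd (z : ℝ) : HasDerivAt (fun z => g t (x + σ t * z)) (σ t * ∂ₓ g t (x + σ t * z)) z := by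
    have hline : HasDerivAt (fun z => x + σ t * z) (σ t) z := by
      simpa using ((hasDerivAt_id z).const_mul (σ t)).const_add x
    exact ((hg.hasDerivAt_space t _).comp z hline).congr_deriv (mul_comm _ _)
  have h := integral_sub_mul_gaussianReal (μ := 0) (v := 1) hd
    (hg.isControlled.integrable_comp_add_mul hσ t x)
    ((hg.spaceDeriv.isControlled.integrable_comp_add_mul hσ t x).const_mul (σ t))
    (by simpa using hg.isControlled.integrable_mul_comp_add_mul hσ t x)
  simpa [integral_const_mul, scaledAvg] using h

theorem Tame.hasDerivAt_param_comp_add_mul (hg : Tame g) {σ' s : ℝ} (hσ : HasDerivAt σ σ' s)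
    (x z : ℝ) : HasDerivAt (fun s => g s (x + σ s * z))
      (∂ₜ g s (x + σ s * z) + σ' * (z * ∂ₓ g s (x + σ s * z))) s := by
  refine (hg.hasDerivAt_comp (hasDerivAt_id s) ((hσ.mul_const z).const_add x)).congr_deriv ?_
  simp only [id]
  ring

theorem hasDerivAt_param_scaledAvg (hg : Tame g) {σ' : ℝ → ℝ}
    (hσ : ∀ t, HasDerivAt σ (σ' t) t) (hσ' : Continuous σ') (t x : ℝ) :
    HasDerivAt (fun s => scaledAvg σ g s x)
      (scaledAvg σ (∂ₜ g) t x + σ t * σ' t * scaledAvg σ (∂ₓ (∂ₓ g)) t x) t := by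
  have hσc : Continuous σ := continuous_iff_continuousAt.2 fun t => (hσ t).continuousAt
  have hgt := hg.paramDeriv.isControlled
  have hgx := hg.spaceDeriv.isControlled
  obtain ⟨C, L, _, hC⟩ := hgt.growth.exists_abs_comp_add_mul_le hσc (|t| + 1) |x|
  obtain ⟨C', L', hC'⟩ := hgx.growth.exists_abs_mul_comp_add_mul_le hσc (|t| + 1) |x|
  obtain ⟨R, hR⟩ := (isCompact_Icc (a := -(|t| + 1)) (b := |t| + 1)).exists_bound_of_continuousOn
    hσ'.continuousOn
  have hbound (s z : ℝ) (hs : |s| ≤ |t| + 1) :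
      |∂ₜ g s (x + σ s * z) + σ' s * (z * ∂ₓ g s (x + σ s * z))| ≤
        C * exp (L * |z|) + R * (C' * exp (L' * |z|)) := by
    have hRs : |σ' s| ≤ R := hR s (abs_le.1 hs)
    refine (abs_add_le _ _).trans (add_le_add (hC s x z hs le_rfl) ?_)
    rw [abs_mul]
    exact mul_le_mul hRs (hC' s x z hs le_rfl) (abs_nonneg _) ((abs_nonneg _).trans hRs)
  have hdiff := (hasDerivAt_integral_of_dominated_loc_of_deriv_le (𝕜 := ℝ)
    (μ := gaussianReal 0 1) (eventually_abs_le_abs_add_one t)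
    (.of_forall fun s => (hg.isControlled.continuous_comp_add_mul σ s x).aestronglyMeasurable)
    (hg.isControlled.integrable_comp_add_mul hσc t x)
    ((hgt.continuous_comp_add_mul σ t x).add (continuous_const.mul
      (continuous_id.mul (hgx.continuous_comp_add_mul σ t x)))).aestronglyMeasurable
    (.of_forall fun z s hs => hbound s z hs)
    (((integrable_exp_mul_abs_gaussianReal L).const_mul C).add
      (((integrable_exp_mul_abs_gaussianReal L').const_mul C').const_mul R))
    (.of_forall fun z s _ => hg.hasDerivAt_param_comp_add_mul (hσ s) x z)).2
  refine hdiff.congr_deriv ?_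
  rw [integral_add (hgt.integrable_comp_add_mul hσc t x)
      ((hgx.integrable_mul_comp_add_mul hσc t x).const_mul (σ' t)),
    integral_const_mul, integral_mul_comp_add_mul hg.spaceDeriv hσc]
  simp only [scaledAvg]
  ring

end ScaledAvg

/-- The average of `g` over a centered Gaussian translation of the space variable with
variance `a + c t ^ 2`. -/
def gaussAvg (a c : ℝ) (g : ParamFun) : ParamFun :=
  fun t x => ∫ y, g t (x + y) ∂gauss (a + c * t ^ 2)

theorem gauss_sq (s : ℝ) : gauss (s ^ 2) = (gaussianReal 0 1).map (s * ·) := by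
  rw [gauss, gaussianReal_map_const_mul, mul_zero, mul_one,
    Real.toNNReal_of_nonneg (sq_nonneg s)]

instance (v : ℝ) : IsProbabilityMeasure (gauss v) := by unfold gauss; infer_instance

/-- When `a = 0` the standard deviation `√c |t|` is not smooth at `t = 0`, but the signed
`√c t` is. -/
theorem exists_contDiff_sq_eq_add_mul_sq {a c : ℝ} (ha : 0 ≤ a) (hc : 0 ≤ c) :
    ∃ σ : ℝ → ℝ, ContDiff ℝ 1 σ ∧ ∀ t, σ t ^ 2 = a + c * t ^ 2 := by
  obtain rfl | ha := ha.eq_or_lt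
  · exact ⟨fun t => √c * t, by fun_prop, fun t => by rw [mul_pow, Real.sq_sqrt hc, zero_add]⟩
  · have hpos (t : ℝ) : 0 < a + c * t ^ 2 := by positivity
    exact ⟨fun t => √(a + c * t ^ 2),
      ContDiff.sqrt (by fun_prop) fun t => (hpos t).ne', fun t => Real.sq_sqrt (hpos t).le⟩

section GaussAvg

variable {a c : ℝ} {f g : ParamFun}

theorem gaussAvg_eq_scaledAvg {σ : ℝ → ℝ} (hσ : ∀ t, σ t ^ 2 = a + c * t ^ 2)
    (hg : ∀ t, Continuous (g t)) : gaussAvg a c g = scaledAvg σ g := by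
  funext t x
  rw [gaussAvg, ← hσ, gauss_sq, integral_map (by fun_prop)]
  · rfl
  · exact ((hg t).comp (by fun_prop)).aestronglyMeasurable

theorem hasDerivAt_param_gaussAvg (ha : 0 ≤ a) (hc : 0 ≤ c) (hg : Tame g) (t x : ℝ) :
    HasDerivAt (fun s => gaussAvg a c g s x)
      ((gaussAvg a c (∂ₜ g) + const c * param * gaussAvg a c (∂ₓ (∂ₓ g))) t x) t := by
  obtain ⟨σ, hσ, hsq⟩ := exists_contDiff_sq_eq_add_mul_sq ha hc
  have hderiv (t : ℝ) : HasDerivAt σ (deriv σ t) t :=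
    (hσ.differentiable one_ne_zero t).hasDerivAt
  have hmul : σ t * deriv σ t = c * t := by
    have h₁ : HasDerivAt (fun s => a + c * s ^ 2) (2 * (σ t * deriv σ t)) t := by
      simp_rw [← hsq]
      exact ((hderiv t).pow 2).congr_deriv (by ring)
    have h₂ : HasDerivAt (fun s => a + c * s ^ 2) (2 * (c * t)) t :=
      (((hasDerivAt_pow 2 t).const_mul c).const_add a).congr_deriv (by ring)
    linarith [h₁.unique h₂]
  simp only [Pi.add_apply, Pi.mul_apply, const, param]
  rw [gaussAvg_eq_scaledAvg hsq hg.isControlled.continuous_space,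
    gaussAvg_eq_scaledAvg hsq hg.paramDeriv.isControlled.continuous_space,
    gaussAvg_eq_scaledAvg hsq hg.spaceDeriv.spaceDeriv.isControlled.continuous_space, ← hmul]
  exact hasDerivAt_param_scaledAvg hg hderiv (hσ.continuous_deriv le_rfl) t x

theorem hasDerivAt_space_gaussAvg (ha : 0 ≤ a) (hc : 0 ≤ c) (hg : Tame g) (t x : ℝ) :
    HasDerivAt (gaussAvg a c g t) (gaussAvg a c (∂ₓ g) t x) x := by
  obtain ⟨σ, hσ, hsq⟩ := exists_contDiff_sq_eq_add_mul_sq ha hc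
  rw [gaussAvg_eq_scaledAvg hsq hg.isControlled.continuous_space,
    gaussAvg_eq_scaledAvg hsq hg.spaceDeriv.isControlled.continuous_space]
  exact hasDerivAt_space_scaledAvg hg hσ.continuous t x

theorem IsControlled.gaussAvg (ha : 0 ≤ a) (hc : 0 ≤ c) (hg : IsControlled g) :
    IsControlled (gaussAvg a c g) := by
  obtain ⟨σ, hσ, hsq⟩ := exists_contDiff_sq_eq_add_mul_sq ha hc
  exact gaussAvg_eq_scaledAvg hsq hg.continuous_space ▸ hg.scaledAvg hσ.continuous

theorem IsControlled.integrable_comp_add (ha : 0 ≤ a) (hc : 0 ≤ c) (hg : IsControlled g)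
    (t x : ℝ) : Integrable (fun y => g t (x + y)) (gauss (a + c * t ^ 2)) := by
  obtain ⟨σ, hσ, hsq⟩ := exists_contDiff_sq_eq_add_mul_sq ha hc
  rw [← hsq, gauss_sq, integrable_map_measure _ (by fun_prop)]
  · exact hg.integrable_comp_add_mul hσ.continuous t x
  · exact ((hg.continuous_space t).comp (by fun_prop)).aestronglyMeasurable

theorem spaceDeriv_gaussAvg (ha : 0 ≤ a) (hc : 0 ≤ c) (hg : Tame g) :
    ∂ₓ (gaussAvg a c g) = gaussAvg a c (∂ₓ g) :=
  spaceDeriv_eq (hasDerivAt_space_gaussAvg ha hc hg)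

/-- The last term is the heat equation: the variance `a + c t ^ 2` moves at speed `2 c t`. -/
theorem paramDeriv_gaussAvg (ha : 0 ≤ a) (hc : 0 ≤ c) (hg : Tame g) :
    ∂ₜ (gaussAvg a c g) =
      gaussAvg a c (∂ₜ g) + const c * param * gaussAvg a c (∂ₓ (∂ₓ g)) :=
  paramDeriv_eq (hasDerivAt_param_gaussAvg ha hc hg)

theorem Tame.gaussAvg (ha : 0 ≤ a) (hc : 0 ≤ c) (hg : Tame g) : Tame (gaussAvg a c g) := by
  intro n
  induction n generalizing g with
  | zero => exact hg.isControlled.gaussAvg ha hc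
  | succ n ih =>
    exact .of_hasDerivAt (hg.isControlled.gaussAvg ha hc) (hasDerivAt_space_gaussAvg ha hc hg)
      (hasDerivAt_param_gaussAvg ha hc hg) (ih hg.spaceDeriv) ((ih hg.paramDeriv).add
        (((Tame.const c).mul .param n).mul (ih hg.spaceDeriv.spaceDeriv)))

theorem gaussAvg_add (ha : 0 ≤ a) (hc : 0 ≤ c) (hf : IsControlled f) (hg : IsControlled g) :
    gaussAvg a c (f + g) = gaussAvg a c f + gaussAvg a c g := by
  funext t x
  exact integral_add (hf.integrable_comp_add ha hc t x) (hg.integrable_comp_add ha hc t x)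

theorem gaussAvg_mono (ha : 0 ≤ a) (hc : 0 ≤ c) (hf : IsControlled f) (hg : IsControlled g)
    {t : ℝ} (h : ∀ x, f t x ≤ g t x) (x : ℝ) : gaussAvg a c f t x ≤ gaussAvg a c g t x :=
  integral_mono (hf.integrable_comp_add ha hc t x) (hg.integrable_comp_add ha hc t x)
    fun y => h (x + y)

theorem gaussAvg_param_mul (φ : ℝ → ℝ) (g : ParamFun) :
    gaussAvg a c (fun t x => φ t * g t x) = fun t x => φ t * gaussAvg a c g t x := by
  funext t x
  exact integral_const_mul _ _

theorem gaussAvg_const (d : ℝ) : gaussAvg a c (const d) = const d := by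
  funext t x
  simp [gaussAvg, const]

end GaussAvg

/-! ### One step of the recursion -/

/-- The class of functions preserved by the Parisi recursion. -/
structure Admissible (u : ParamFun) : Prop where
  tame : Tame u
  nonneg : ∀ t x, 0 ≤ u t x
  abs_spaceDeriv_le_one : ∀ t x, |∂ₓ u t x| ≤ 1

theorem Admissible.le_add_abs {u : ParamFun} (hu : Admissible u) (t x : ℝ) :
    u t x ≤ u t 0 + |x| := by
  have h := Convex.norm_image_sub_le_of_norm_hasDerivWithin_le (f := u t) (f' := ∂ₓ u t)
    (s := Set.univ) (x := 0) (y := x) (fun y _ => (hu.tame.hasDerivAt_space t y).hasDerivWithinAt)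
    (fun y _ => hu.abs_spaceDeriv_le_one t y) convex_univ trivial trivial
  rw [norm_eq_abs, norm_eq_abs, sub_zero, one_mul] at h
  linarith [le_abs_self (u t x - u t 0)]

theorem Admissible.hasExpGrowth_exp_mul {u : ParamFun} (hu : Admissible u) {m : ℝ} (hm : 0 ≤ m) :
    HasExpGrowth fun t x => exp (m * u t x) := by
  intro T
  obtain ⟨C, K, -, -, h⟩ := hu.tame.isControlled.growth T
  refine ⟨exp (m * C), m, (exp_pos _).le, hm, fun t x ht => ?_⟩
  have h₀ : u t 0 ≤ C := (le_abs_self _).trans (by simpa using h t 0 ht)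
  rw [abs_of_pos (exp_pos _), ← Real.exp_add, ← mul_add]
  gcongr
  linarith [hu.le_add_abs t x]

/-- The data of one step of the Parisi recursion: a function `u`, an exponent `m` and the
variance `a + c t ^ 2` of a Gaussian translation. -/
structure ParisiStep where
  a : ℝ
  c : ℝ
  m : ℝ
  u : ParamFun
  a_nonneg : 0 ≤ a
  c_nonneg : 0 ≤ c
  m_nonneg : 0 ≤ m
  admissible : Admissible u

namespace ParisiStep

variable (P : ParisiStep) {f g : ParamFun}

/-- The exponential tilt `exp (m u)`. -/
def weight : ParamFun := fun t x => exp ((const P.m * P.u) t x)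

/-- The unnormalized tilted Gaussian average of `f`. -/
def weightedAvg (f : ParamFun) : ParamFun := gaussAvg P.a P.c (f * P.weight)

/-- The tilted Gaussian mean of `f`, which averages against the density proportional to
`exp (m u)` with respect to the Gaussian translation. -/
def mean (f : ParamFun) : ParamFun := P.weightedAvg f * (P.weightedAvg 1)⁻¹

/-- The covariance of `f` and `g` under the tilted Gaussian mean. -/
def cov (f g : ParamFun) : ParamFun := P.mean (f * g) - P.mean f * P.mean g

/-- The output `m⁻¹ log 𝔼 exp (m u)` of the step, read as `𝔼 u` when `m = 0`. -/
def next : ParamFun :=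
  if P.m = 0 then gaussAvg P.a P.c P.u
  else const (1 / P.m) * fun t x => log (P.weightedAvg 1 t x)

/-- `u_xx + m u_x²`, which is `weight⁻¹ ∂ₓ² weight` divided by `m`. -/
def curvature : ParamFun := ∂ₓ (∂ₓ P.u) + const P.m * (∂ₓ P.u * ∂ₓ P.u)

/-- The conjugate `f_xx + 2 m f_x u_x` of the second space derivative by the tilt, without its
term of order zero in `f`. -/
def generator (f : ParamFun) : ParamFun :=
  ∂ₓ (∂ₓ f) + const P.m * (∂ₓ f * ∂ₓ P.u + ∂ₓ f * ∂ₓ P.u)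

theorem tame_u : Tame P.u := P.admissible.tame

theorem tame_weight : Tame P.weight :=
  ((Tame.const P.m).mul P.tame_u).exp (P.admissible.hasExpGrowth_exp_mul P.m_nonneg)

theorem one_le_weight (t x : ℝ) : 1 ≤ P.weight t x :=
  Real.one_le_exp (mul_nonneg P.m_nonneg (P.admissible.nonneg t x))

theorem tame_curvature : Tame P.curvature :=
  P.tame_u.spaceDeriv.spaceDeriv.add
    ((Tame.const P.m).mul (P.tame_u.spaceDeriv.mul P.tame_u.spaceDeriv))

theorem tame_generator (hf : Tame f) : Tame (P.generator f) :=
  hf.spaceDeriv.spaceDeriv.add ((Tame.const P.m).mul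
    ((hf.spaceDeriv.mul P.tame_u.spaceDeriv).add (hf.spaceDeriv.mul P.tame_u.spaceDeriv)))

theorem tame_weightedAvg (hf : Tame f) : Tame (P.weightedAvg f) :=
  (hf.mul P.tame_weight).gaussAvg P.a_nonneg P.c_nonneg

theorem spaceDeriv_mul_weight (hf : Tame f) :
    ∂ₓ (f * P.weight) = (∂ₓ f + const P.m * (f * ∂ₓ P.u)) * P.weight := by
  have hw : ∂ₓ P.weight = P.weight * (const P.m * ∂ₓ P.u) := by
    rw [← spaceDeriv_const_mul _ P.tame_u]
    exact spaceDeriv_exp ((Tame.const P.m).mul P.tame_u)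
  rw [spaceDeriv_mul hf P.tame_weight, hw]
  ring

theorem paramDeriv_mul_weight (hf : Tame f) :
    ∂ₜ (f * P.weight) = (∂ₜ f + const P.m * (f * ∂ₜ P.u)) * P.weight := by
  have hw : ∂ₜ P.weight = P.weight * (const P.m * ∂ₜ P.u) := by
    rw [← paramDeriv_const_mul _ P.tame_u]
    exact paramDeriv_exp ((Tame.const P.m).mul P.tame_u)
  rw [paramDeriv_mul hf P.tame_weight, hw]
  ring

theorem spaceDeriv_spaceDeriv_mul_weight (hf : Tame f) :
    ∂ₓ (∂ₓ (f * P.weight)) = (P.generator f + const P.m * (f * P.curvature)) * P.weight := by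
  have hux := P.tame_u.spaceDeriv
  have hfu := hf.mul hux
  rw [spaceDeriv_mul_weight P hf, spaceDeriv_mul_weight P
      (hf.spaceDeriv.add ((Tame.const P.m).mul hfu)),
    spaceDeriv_add hf.spaceDeriv ((Tame.const P.m).mul hfu), spaceDeriv_const_mul _ hfu,
    spaceDeriv_mul hf hux, generator, curvature]
  ring

theorem weightedAvg_add (hf : Tame f) (hg : Tame g) :
    P.weightedAvg (f + g) = P.weightedAvg f + P.weightedAvg g := by
  rw [weightedAvg, add_mul, gaussAvg_add P.a_nonneg P.c_nonneg
    (hf.mul P.tame_weight).isControlled (hg.mul P.tame_weight).isControlled]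
  rfl

theorem weightedAvg_param_mul (φ : ℝ → ℝ) (f : ParamFun) :
    P.weightedAvg (fun t x => φ t * f t x) = fun t x => φ t * P.weightedAvg f t x := by
  rw [weightedAvg, weightedAvg, ← gaussAvg_param_mul]
  congr 1 with t x
  exact mul_assoc _ _ _

theorem weightedAvg_const_mul (d : ℝ) (f : ParamFun) :
    P.weightedAvg (const d * f) = const d * P.weightedAvg f :=
  P.weightedAvg_param_mul (fun _ => d) f

theorem one_le_weightedAvg_one (t x : ℝ) : 1 ≤ P.weightedAvg 1 t x := by
  have h := gaussAvg_mono P.a_nonneg P.c_nonneg (.const 1) P.tame_weight.isControlled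
    (P.one_le_weight t) x
  rwa [gaussAvg_const, ← one_mul P.weight] at h

theorem weightedAvg_one_ne_zero (t x : ℝ) : P.weightedAvg 1 t x ≠ 0 :=
  (one_pos.trans_le (P.one_le_weightedAvg_one t x)).ne'

theorem weightedAvg_one_mul_inv : P.weightedAvg 1 * (P.weightedAvg 1)⁻¹ = 1 := by
  funext t x
  exact mul_inv_cancel₀ (P.weightedAvg_one_ne_zero t x)

theorem tame_weightedAvg_one : Tame (P.weightedAvg 1) := P.tame_weightedAvg (.const 1)

theorem spaceDeriv_weightedAvg (hf : Tame f) :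
    ∂ₓ (P.weightedAvg f) = P.weightedAvg (∂ₓ f) + const P.m * P.weightedAvg (f * ∂ₓ P.u) := by
  have hfu := hf.mul P.tame_u.spaceDeriv
  rw [weightedAvg, spaceDeriv_gaussAvg P.a_nonneg P.c_nonneg (hf.mul P.tame_weight),
    P.spaceDeriv_mul_weight hf]
  exact (P.weightedAvg_add hf.spaceDeriv ((Tame.const P.m).mul hfu)).trans
    (by rw [weightedAvg_const_mul])

theorem paramDeriv_weightedAvg (hf : Tame f) :
    ∂ₜ (P.weightedAvg f) = P.weightedAvg (∂ₜ f) + const P.m * P.weightedAvg (f * ∂ₜ P.u) +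
      const P.c * param * (P.weightedAvg (P.generator f) +
        const P.m * P.weightedAvg (f * P.curvature)) := by
  have hm := Tame.const P.m
  rw [weightedAvg, paramDeriv_gaussAvg P.a_nonneg P.c_nonneg (hf.mul P.tame_weight),
    P.paramDeriv_mul_weight hf, P.spaceDeriv_spaceDeriv_mul_weight hf, ← weightedAvg,
    ← weightedAvg, P.weightedAvg_add hf.paramDeriv (hm.mul (hf.mul P.tame_u.paramDeriv)),
    P.weightedAvg_add (P.tame_generator hf) (hm.mul (hf.mul P.tame_curvature)),
    weightedAvg_const_mul, weightedAvg_const_mul]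

theorem tame_mean (hf : Tame f) : Tame (P.mean f) :=
  (P.tame_weightedAvg hf).mul (P.tame_weightedAvg_one.inv P.one_le_weightedAvg_one)

theorem mean_add (hf : Tame f) (hg : Tame g) : P.mean (f + g) = P.mean f + P.mean g := by
  rw [mean, P.weightedAvg_add hf hg, add_mul]
  rfl

theorem mean_const_mul (d : ℝ) (f : ParamFun) : P.mean (const d * f) = const d * P.mean f := by
  rw [mean, weightedAvg_const_mul, mul_assoc, mean]

theorem mean_const (d : ℝ) : P.mean (const d) = const d := by
  rw [← mul_one (const d), mean_const_mul, mean, weightedAvg_one_mul_inv]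

theorem mean_mono (hf : Tame f) (hg : Tame g) {t : ℝ} (h : ∀ x, f t x ≤ g t x) (x : ℝ) :
    P.mean f t x ≤ P.mean g t x := by
  refine mul_le_mul_of_nonneg_right ?_
    (inv_nonneg.2 (zero_le_one.trans (P.one_le_weightedAvg_one t x)))
  exact gaussAvg_mono P.a_nonneg P.c_nonneg (hf.mul P.tame_weight).isControlled
    (hg.mul P.tame_weight).isControlled
    (fun y => mul_le_mul_of_nonneg_right (h y) (zero_le_one.trans (P.one_le_weight t y))) x

theorem mean_le {t d : ℝ} (hf : Tame f) (h : ∀ x, f t x ≤ d) (x : ℝ) : P.mean f t x ≤ d :=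
  (P.mean_mono hf (.const d) h x).trans_eq (by rw [mean_const]; rfl)

theorem le_mean {t d : ℝ} (hf : Tame f) (h : ∀ x, d ≤ f t x) (x : ℝ) : d ≤ P.mean f t x :=
  (P.mean_mono (.const d) hf h x).trans_eq' (by rw [mean_const]; rfl)

theorem abs_mean_le {t d : ℝ} (hf : Tame f) (h : ∀ x, |f t x| ≤ d) (x : ℝ) :
    |P.mean f t x| ≤ d :=
  abs_le.2 ⟨P.le_mean hf (fun y => (abs_le.1 (h y)).1) x,
    P.mean_le hf (fun y => (abs_le.1 (h y)).2) x⟩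

theorem cov_self_nonneg (hf : Tame f) (t x : ℝ) : 0 ≤ P.cov f f t x := by
  set d := P.mean f t x with hd
  have hlin : Tame (const (-(2 * d)) * f) := (Tame.const _).mul hf
  have h : 0 ≤ P.mean (f * f + (const (-(2 * d)) * f + const (d * d))) t x := by
    refine P.le_mean ((hf.mul hf).add (hlin.add (.const _))) (fun y => ?_) x
    have hsq : (f * f + (const (-(2 * d)) * f + const (d * d))) t y = (f t y - d) ^ 2 := by
      simp only [Pi.add_apply, Pi.mul_apply, const]
      ring
    exact hsq ▸ sq_nonneg _
  rw [P.mean_add (hf.mul hf) (hlin.add (.const _)), P.mean_add hlin (.const _), mean_const_mul,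
    mean_const] at h
  simp only [Pi.add_apply, Pi.mul_apply, const, ← hd] at h
  simp only [cov, Pi.sub_apply, Pi.mul_apply, ← hd]
  linarith

theorem weightedAvg_zero : P.weightedAvg 0 = 0 := by
  have h := P.weightedAvg_const_mul 0 0
  rwa [mul_zero, show const 0 * P.weightedAvg 0 = 0 from zero_mul _] at h

theorem generator_one : P.generator 1 = 0 := by
  rw [generator, spaceDeriv_one, show ∂ₓ 0 = 0 from spaceDeriv_const 0]
  ring

theorem spaceDeriv_weightedAvg_one :
    ∂ₓ (P.weightedAvg 1) = const P.m * P.weightedAvg (∂ₓ P.u) := by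
  rw [P.spaceDeriv_weightedAvg .one, spaceDeriv_one, weightedAvg_zero, zero_add, one_mul]

theorem paramDeriv_weightedAvg_one :
    ∂ₜ (P.weightedAvg 1) = const P.m * (P.weightedAvg (∂ₜ P.u) +
      const P.c * param * P.weightedAvg P.curvature) := by
  rw [P.paramDeriv_weightedAvg .one, paramDeriv_one, weightedAvg_zero, generator_one,
    weightedAvg_zero, one_mul, one_mul]
  ring

theorem spaceDeriv_mean (hf : Tame f) :
    ∂ₓ (P.mean f) = P.mean (∂ₓ f) + const P.m * P.cov f (∂ₓ P.u) := by
  rw [mean, spaceDeriv_mul (P.tame_weightedAvg hf)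
      (P.tame_weightedAvg_one.inv P.one_le_weightedAvg_one), P.spaceDeriv_weightedAvg hf,
    spaceDeriv_inv P.tame_weightedAvg_one P.weightedAvg_one_ne_zero,
    spaceDeriv_weightedAvg_one]
  simp only [cov, mean]
  ring

theorem paramDeriv_mean (hf : Tame f) :
    ∂ₜ (P.mean f) = P.mean (∂ₜ f) + const P.c * param * P.mean (P.generator f) +
      const P.m * (P.cov f (∂ₜ P.u) + const P.c * param * P.cov f P.curvature) := by
  rw [mean, paramDeriv_mul (P.tame_weightedAvg hf)
      (P.tame_weightedAvg_one.inv P.one_le_weightedAvg_one), P.paramDeriv_weightedAvg hf,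
    paramDeriv_inv P.tame_weightedAvg_one P.weightedAvg_one_ne_zero,
    paramDeriv_weightedAvg_one]
  simp only [cov, mean]
  ring

theorem mean_eq_gaussAvg (hm : P.m = 0) (f : ParamFun) : P.mean f = gaussAvg P.a P.c f := by
  have hw : P.weight = 1 := by
    funext t x
    simp [weight, hm, const]
  rw [mean, weightedAvg, weightedAvg, hw, mul_one, mul_one,
    show gaussAvg P.a P.c 1 = 1 from gaussAvg_const 1, inv_one, mul_one]

theorem tame_next : Tame P.next := by
  unfold next
  split_ifs with hm
  · exact P.tame_u.gaussAvg P.a_nonneg P.c_nonneg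
  · exact (Tame.const _).mul (P.tame_weightedAvg_one.log P.one_le_weightedAvg_one)

theorem const_one_div_mul_const {m : ℝ} (hm : m ≠ 0) : const (1 / m) * const m = 1 := by
  funext t x
  simp [const, hm]

theorem spaceDeriv_next : ∂ₓ P.next = P.mean (∂ₓ P.u) := by
  unfold next
  split_ifs with hm
  · rw [mean_eq_gaussAvg P hm, spaceDeriv_gaussAvg P.a_nonneg P.c_nonneg P.tame_u]
  · rw [spaceDeriv_const_mul _ (P.tame_weightedAvg_one.log P.one_le_weightedAvg_one),
      spaceDeriv_log P.tame_weightedAvg_one P.weightedAvg_one_ne_zero,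
      spaceDeriv_weightedAvg_one, mul_assoc, ← mul_assoc, const_one_div_mul_const hm, one_mul, mean]

theorem paramDeriv_next :
    ∂ₜ P.next = P.mean (∂ₜ P.u) + const P.c * param * P.mean P.curvature := by
  unfold next
  split_ifs with hm
  · rw [mean_eq_gaussAvg P hm, mean_eq_gaussAvg P hm,
      paramDeriv_gaussAvg P.a_nonneg P.c_nonneg P.tame_u, curvature, hm,
      show const 0 * (∂ₓ P.u * ∂ₓ P.u) = 0 from zero_mul _, add_zero]
  · rw [paramDeriv_const_mul _ (P.tame_weightedAvg_one.log P.one_le_weightedAvg_one),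
      paramDeriv_log P.tame_weightedAvg_one P.weightedAvg_one_ne_zero,
      paramDeriv_weightedAvg_one, mul_assoc, ← mul_assoc, const_one_div_mul_const hm, one_mul,
      mean, mean]
    ring

theorem admissible_next : Admissible P.next := by
  refine ⟨P.tame_next, fun t x => ?_, fun t x => ?_⟩
  · unfold next
    split_ifs
    · exact integral_nonneg fun y => P.admissible.nonneg t (x + y)
    · exact mul_nonneg (one_div_nonneg.2 P.m_nonneg)
        (Real.log_nonneg (P.one_le_weightedAvg_one t x))
  · rw [spaceDeriv_next]
    exact P.abs_mean_le P.tame_u.spaceDeriv (P.admissible.abs_spaceDeriv_le_one t) x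

end ParisiStep

/-! ### The logarithm of the hyperbolic cosine -/

/-- A polynomial in `tanh x`, as a function of the space variable only. -/
def tanhPoly (p : Polynomial ℝ) : ParamFun := fun _ x => p.eval (tanh x)

/-- The initial condition of the Parisi recursion. -/
def logCosh : ParamFun := fun _ x => log (cosh x)

theorem hasDerivAt_tanh (x : ℝ) : HasDerivAt tanh (1 - tanh x ^ 2) x := by
  have hcosh : cosh x ≠ 0 := (cosh_pos x).ne'
  rw [funext Real.tanh_eq_sinh_div_cosh]
  refine ((Real.hasDerivAt_sinh x).fun_div (Real.hasDerivAt_cosh x) hcosh).congr_deriv ?_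
  field_simp

theorem hasDerivAt_space_tanhPoly (p : Polynomial ℝ) (t x : ℝ) :
    HasDerivAt (tanhPoly p t) (tanhPoly (p.derivative * (1 - Polynomial.X ^ 2)) t x) x := by
  refine ((p.hasDerivAt (tanh x)).comp x (hasDerivAt_tanh x)).congr_deriv ?_
  simp [tanhPoly]

theorem spaceDeriv_tanhPoly (p : Polynomial ℝ) :
    ∂ₓ (tanhPoly p) = tanhPoly (p.derivative * (1 - Polynomial.X ^ 2)) :=
  spaceDeriv_eq (hasDerivAt_space_tanhPoly p)

theorem tanhPoly_zero : tanhPoly 0 = 0 := by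
  funext t x
  exact Polynomial.eval_zero

theorem paramDeriv_tanhPoly (p : Polynomial ℝ) : ∂ₜ (tanhPoly p) = tanhPoly 0 := by
  rw [tanhPoly_zero]
  exact paramDeriv_eq fun t x => hasDerivAt_const t (p.eval (tanh x))

theorem exists_abs_tanhPoly_le (p : Polynomial ℝ) : ∃ C, ∀ t x, |tanhPoly p t x| ≤ C := by
  obtain ⟨C, hC⟩ := (isCompact_Icc (a := (-1 : ℝ)) (b := 1)).exists_bound_of_continuousOn
    (f := fun y => p.eval y) p.continuous.continuousOn
  exact ⟨C, fun _ x => hC _ (abs_le.1 (Real.abs_tanh_lt_one x).le)⟩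

theorem isControlled_tanhPoly (p : Polynomial ℝ) : IsControlled (tanhPoly p) := by
  obtain ⟨C, hC⟩ := exists_abs_tanhPoly_le p
  have hcont : Continuous (tanhPoly p 0) := continuous_iff_continuousAt.2 fun x =>
    (hasDerivAt_space_tanhPoly p 0 x).continuousAt
  exact ⟨hcont.comp continuous_snd, .of_bounded C hC⟩

theorem tame_tanhPoly (p : Polynomial ℝ) : Tame (tanhPoly p) := by
  intro n
  induction n generalizing p with
  | zero => exact isControlled_tanhPoly p
  | succ n ih =>
    exact .of_hasDerivAt (isControlled_tanhPoly p) (hasDerivAt_space_tanhPoly p)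
      (fun t _ => hasDerivAt_const t _) (ih _) (Tame.const 0 n)

theorem hasDerivAt_space_logCosh (t x : ℝ) :
    HasDerivAt (logCosh t) (tanhPoly Polynomial.X t x) x := by
  refine ((Real.hasDerivAt_cosh x).log (cosh_pos x).ne').congr_deriv ?_
  simp [tanhPoly, Real.tanh_eq_sinh_div_cosh]

theorem spaceDeriv_logCosh : ∂ₓ logCosh = tanhPoly Polynomial.X :=
  spaceDeriv_eq hasDerivAt_space_logCosh

theorem paramDeriv_logCosh : ∂ₜ logCosh = 0 := paramDeriv_eq fun t _ => hasDerivAt_const t _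

theorem logCosh_nonneg (t x : ℝ) : 0 ≤ logCosh t x := Real.log_nonneg (Real.one_le_cosh x)

theorem isControlled_logCosh : IsControlled logCosh := by
  have hcont : Continuous (logCosh 0) := continuous_iff_continuousAt.2 fun x =>
    (hasDerivAt_space_logCosh 0 x).continuousAt
  refine ⟨hcont.comp continuous_snd, fun T => ⟨1, 1, one_pos.le, one_pos.le, fun t x _ => ?_⟩⟩
  rw [abs_of_nonneg (logCosh_nonneg t x), one_mul, one_mul]
  calc log (cosh x) ≤ cosh |x| := by
        rw [← cosh_abs]; exact Real.log_le_self (cosh_pos _).le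
    _ ≤ exp |x| := by
        rw [Real.cosh_eq]
        have : exp (-|x|) ≤ exp |x| := Real.exp_le_exp.2 (neg_le_self (abs_nonneg x))
        linarith

theorem tame_logCosh : Tame logCosh := by
  intro n
  cases n with
  | zero => exact isControlled_logCosh
  | succ n =>
    exact .of_hasDerivAt isControlled_logCosh hasDerivAt_space_logCosh
      (fun t _ => hasDerivAt_const t _) (tame_tanhPoly _ n) (Tame.const 0 n)

theorem admissible_logCosh : Admissible logCosh where
  tame := tame_logCosh
  nonneg := logCosh_nonneg
  abs_spaceDeriv_le_one t x := by
    rw [spaceDeriv_logCosh]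
    simpa [tanhPoly] using (Real.abs_tanh_lt_one x).le

/-! ### Observables of the recursion -/

/-- The parameters of an infinite Parisi recursion: its `i`-th step has exponent `m i` and
variance `a i + c i * t ^ 2`, and the total coefficient of `t ^ 2` is at most `C`. -/
structure Recursion (C : ℝ) where
  a : ℕ → ℝ
  c : ℕ → ℝ
  m : ℕ → ℝ
  a_nonneg : ∀ i, 0 ≤ a i
  c_nonneg : ∀ i, 0 ≤ c i
  m_nonneg : ∀ i, 0 ≤ m i
  m_le_one : ∀ i, m i ≤ 1
  sum_c_le : ∀ n, ∑ i ∈ Finset.range n, c i ≤ C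

variable {C : ℝ}

namespace Recursion

/-- The step from the `i`-th to the `(i + 1)`-st function of the recursion. -/
def step (R : Recursion C) : ℕ → ParisiStep
  | 0 => ⟨R.a 0, R.c 0, R.m 0, logCosh, R.a_nonneg 0, R.c_nonneg 0, R.m_nonneg 0,
      admissible_logCosh⟩
  | i + 1 => ⟨R.a (i + 1), R.c (i + 1), R.m (i + 1), (R.step i).next, R.a_nonneg _,
      R.c_nonneg _, R.m_nonneg _, (R.step i).admissible_next⟩

variable (R : Recursion C) (i : ℕ)

theorem step_a : (R.step i).a = R.a i := by cases i <;> rfl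

theorem step_c : (R.step i).c = R.c i := by cases i <;> rfl

theorem step_m : (R.step i).m = R.m i := by cases i <;> rfl

theorem c_le : R.c i ≤ C :=
  (Finset.single_le_sum (f := R.c) (fun j _ => R.c_nonneg j)
    (Finset.self_mem_range_succ i)).trans (R.sum_c_le (i + 1))

end Recursion

/-- The tame functions attached to every step of every recursion. Bounds on such functions are
meant to be uniform in the recursion and in the number of steps. -/
def observables (C : ℝ) : Subalgebra ℝ (Recursion C → ℕ → ParamFun) where
  carrier := {f | ∀ R i, Tame (f R i)}
  mul_mem' hf hg R i := (hf R i).mul (hg R i)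
  add_mem' hf hg R i := (hf R i).add (hg R i)
  algebraMap_mem' d _ _ := .const d

/-- The algebra in which the estimates on the recursion are carried out. -/
def Observable (C : ℝ) : Type := observables C

instance : CommRing (Observable C) := inferInstanceAs (CommRing (observables C))

instance : Algebra ℝ (Observable C) := inferInstanceAs (Algebra ℝ (observables C))

instance : CoeFun (Observable C) fun _ => Recursion C → ℕ → ParamFun := ⟨Subtype.val⟩

namespace Observable

/-- The space derivative as a derivation of the algebra of observables. -/
def spaceDerivation : Derivation ℝ (Observable C) (Observable C) :=
  .mk' { toFun := fun f => ⟨fun R i => ∂ₓ (f R i), fun R i => (f.2 R i).spaceDeriv⟩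
         map_add' := fun f g => Subtype.ext <| funext₂ fun R i =>
           spaceDeriv_add (f.2 R i) (g.2 R i)
         map_smul' := fun d f => Subtype.ext <| funext₂ fun R i =>
           spaceDeriv_const_mul d (f.2 R i) }
    fun f g => Subtype.ext <| funext₂ fun R i =>
      (spaceDeriv_mul (f.2 R i) (g.2 R i)).trans (by
        change _ = f R i * ∂ₓ (g R i) + g R i * ∂ₓ (f R i)
        ring)

/-- The parameter derivative as a derivation of the algebra of observables. -/
def paramDerivation : Derivation ℝ (Observable C) (Observable C) :=
  .mk' { toFun := fun f => ⟨fun R i => ∂ₜ (f R i), fun R i => (f.2 R i).paramDeriv⟩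
         map_add' := fun f g => Subtype.ext <| funext₂ fun R i =>
           paramDeriv_add (f.2 R i) (g.2 R i)
         map_smul' := fun d f => Subtype.ext <| funext₂ fun R i =>
           paramDeriv_const_mul d (f.2 R i) }
    fun f g => Subtype.ext <| funext₂ fun R i =>
      (paramDeriv_mul (f.2 R i) (g.2 R i)).trans (by
        change _ = f R i * ∂ₜ (g R i) + g R i * ∂ₜ (f R i)
        ring)

/-- The observable at the next step of the recursion. -/
def shift : Observable C →ₐ[ℝ] Observable C where
  toFun f := ⟨fun R i => f R (i + 1), fun R i => f.2 R (i + 1)⟩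
  map_one' := rfl
  map_mul' _ _ := rfl
  map_zero' := rfl
  map_add' _ _ := rfl
  commutes' _ := rfl

/-- The tilted Gaussian mean, taken at every step. -/
def mean : Observable C →ₗ[ℝ] Observable C where
  toFun f := ⟨fun R i => (R.step i).mean (f R i), fun R i => (R.step i).tame_mean (f.2 R i)⟩
  map_add' f g := Subtype.ext <| funext₂ fun R i => (R.step i).mean_add (f.2 R i) (g.2 R i)
  map_smul' d f := Subtype.ext <| funext₂ fun R i => (R.step i).mean_const_mul d (f R i)

/-- The defect of an observable from being a martingale for the tilted Gaussian means. -/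
def drift : Observable C →ₗ[ℝ] Observable C := shift.toLinearMap - mean

/-- The covariance under the tilted Gaussian mean, taken at every step. -/
def cov (f g : Observable C) : Observable C := mean (f * g) - mean f * mean g

/-- The exponents `m` of the recursion. -/
def exponent : Observable C := ⟨fun R i => const (R.step i).m, fun _ _ => .const _⟩

/-- The coefficients `c` of `t ^ 2` in the variances of the recursion. -/
def coefficient : Observable C := ⟨fun R i => const (R.step i).c, fun _ _ => .const _⟩

/-- The parameter `t`. -/
def parameter : Observable C := ⟨fun _ _ => param, fun _ _ => .param⟩

/-- The functions produced by the recursion. -/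
def value : Observable C := ⟨fun R i => (R.step i).u, fun R i => (R.step i).tame_u⟩

/-- The space derivative of the functions produced by the recursion. -/
def slope : Observable C := spaceDerivation value

end Observable

open Observable

local notation "δₓ" => spaceDerivation
local notation "δₜ" => paramDerivation

namespace Observable

variable (f g : Observable C)

theorem spaceDerivation_mul : δₓ (f * g) = δₓ f * g + f * δₓ g := by
  rw [Derivation.leibniz, smul_eq_mul, smul_eq_mul]
  ring

theorem paramDerivation_mul : δₜ (f * g) = δₜ f * g + f * δₜ g := by
  rw [Derivation.leibniz, smul_eq_mul, smul_eq_mul]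
  ring

theorem spaceDerivation_paramDerivation_comm : δₓ (δₜ f) = δₜ (δₓ f) :=
  Subtype.ext <| funext₂ fun R i => spaceDeriv_paramDeriv_comm (f.2 R i)

theorem spaceDerivation_exponent : δₓ (exponent : Observable C) = 0 :=
  Subtype.ext <| funext₂ fun R i => spaceDeriv_const (R.step i).m

theorem spaceDerivation_coefficient : δₓ (coefficient : Observable C) = 0 :=
  Subtype.ext <| funext₂ fun R i => spaceDeriv_const (R.step i).c

theorem spaceDerivation_parameter : δₓ (parameter : Observable C) = 0 :=
  Subtype.ext <| funext₂ fun _ _ => spaceDeriv_param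

theorem spaceDerivation_mean : δₓ (mean f) = mean (δₓ f) + exponent * cov f slope :=
  Subtype.ext <| funext₂ fun R i => (R.step i).spaceDeriv_mean (f.2 R i)

theorem drift_eq : drift f = shift f - mean f := rfl

theorem drift_spaceDerivation : drift (δₓ f) = δₓ (drift f) + exponent * cov f slope := by
  rw [drift_eq, drift_eq, map_sub, spaceDerivation_mean,
    show δₓ (shift f) = shift (δₓ f) from rfl]
  ring

theorem drift_mul : drift (f * g) = shift g * drift f + mean f * drift g - cov f g := by
  rw [drift_eq, drift_eq, drift_eq, map_mul, cov]
  ring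

theorem spaceDerivation_cov :
    δₓ (cov f g) = cov (δₓ f) g + cov f (δₓ g) +
      exponent * (cov (f * g) slope - mean g * cov f slope - mean f * cov g slope) := by
  have h (f' g' : Observable C) : mean (f' * g') = cov f' g' + mean f' * mean g' := by
    rw [cov]
    ring
  conv_lhs => rw [cov]
  rw [map_sub, spaceDerivation_mul, spaceDerivation_mean, spaceDerivation_mean,
    spaceDerivation_mean, spaceDerivation_mul, map_add, h, h]
  ring

theorem cov_eq_polarization :
    cov f g = (1 / 2 : ℝ) • (cov (f + g) (f + g) - cov f f - cov g g) := by
  have h : (f + g) * (f + g) = f * f + (2 : ℝ) • (f * g) + g * g := by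
    rw [two_smul]
    ring
  have h' : (mean f + mean g) * (mean f + mean g) =
      mean f * mean f + (2 : ℝ) • (mean f * mean g) + mean g * mean g := by
    rw [two_smul]
    ring
  simp only [cov, h, h', map_add, map_smul]
  module

theorem drift_slope : drift (slope : Observable C) = 0 :=
  sub_eq_zero.2 (Subtype.ext <| funext₂ fun R i => (R.step i).spaceDeriv_next)

theorem cov_self_nonneg (R : Recursion C) (i : ℕ) (t x : ℝ) : 0 ≤ cov f f R i t x :=
  (R.step i).cov_self_nonneg (f.2 R i) t x

end Observable

/-! ### Uniform bounds along the recursion -/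

/-- The observables bounded for `|t| ≤ B`, uniformly in the recursion and the step. -/
def boundedObservables (C B : ℝ) : AddSubgroup (Observable C) where
  carrier := {f | ∃ K, 0 ≤ K ∧ ∀ R i t x, |t| ≤ B → |f R i t x| ≤ K}
  add_mem' := fun ⟨F, hF, hf⟩ ⟨G, hG, hg⟩ => ⟨F + G, add_nonneg hF hG, fun R i t x ht =>
    (abs_add_le _ _).trans (add_le_add (hf R i t x ht) (hg R i t x ht))⟩
  zero_mem' := ⟨0, le_rfl, fun _ _ _ _ _ => abs_zero.le⟩
  neg_mem' := fun ⟨F, hF, hf⟩ => ⟨F, hF, fun R i t x ht => (abs_neg _).trans_le (hf R i t x ht)⟩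

/-- The observables `e` whose accumulated absolute value is bounded: a bounded potential `Q`
loses at least `|e|` in conditional mean at each step, up to `O(c)`. -/
def summableObservables (C B : ℝ) : AddSubgroup (Observable C) where
  carrier := {e | ∃ K, 0 ≤ K ∧ ∃ Q : Observable C,
    (∀ R i t x, |t| ≤ B → 0 ≤ Q R i t x ∧ Q R i t x ≤ K) ∧
    ∀ R i t x, |t| ≤ B → |e R i t x| + drift Q R i t x ≤ K * R.c i}
  add_mem' := by
    rintro e e' ⟨K, hK, Q, hQ, he⟩ ⟨K', hK', Q', hQ', he'⟩
    refine ⟨K + K', add_nonneg hK hK', Q + Q', fun R i t x ht => ⟨?_, ?_⟩, fun R i t x ht => ?_⟩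
    · exact add_nonneg (hQ R i t x ht).1 (hQ' R i t x ht).1
    · exact add_le_add (hQ R i t x ht).2 (hQ' R i t x ht).2
    · rw [map_add]
      change |e R i t x + e' R i t x| + (drift Q R i t x + drift Q' R i t x) ≤ _
      linarith [abs_add_le (e R i t x) (e' R i t x), he R i t x ht, he' R i t x ht]
  zero_mem' := by
    refine ⟨0, le_rfl, 0, fun _ _ _ _ _ => ⟨le_rfl, le_rfl⟩, fun R i t x _ => ?_⟩
    rw [map_zero, zero_mul]
    exact (add_zero |(0 : ℝ)|).trans_le abs_zero.le
  neg_mem' := fun ⟨K, hK, Q, hQ, he⟩ => ⟨K, hK, Q, hQ, fun R i t x ht =>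
    (congrArg (· + drift Q R i t x) (abs_neg (_ : ℝ))).trans_le (he R i t x ht)⟩

/-- The bounded observables whose drift has bounded accumulated absolute value. -/
def quasimartingales (C B : ℝ) : AddSubgroup (Observable C) :=
  boundedObservables C B ⊓ (summableObservables C B).comap drift.toAddMonoidHom

variable {B : ℝ} {f g : Observable C}

theorem mem_quasimartingales : f ∈ quasimartingales C B ↔
    f ∈ boundedObservables C B ∧ drift f ∈ summableObservables C B := Iff.rfl

theorem mul_mem_boundedObservables (hf : f ∈ boundedObservables C B)
    (hg : g ∈ boundedObservables C B) : f * g ∈ boundedObservables C B := by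
  obtain ⟨F, hF, hf⟩ := hf
  obtain ⟨G, hG, hg⟩ := hg
  exact ⟨F * G, mul_nonneg hF hG, fun R i t x ht => (abs_mul _ _).trans_le
    (mul_le_mul (hf R i t x ht) (hg R i t x ht) (abs_nonneg _) hF)⟩

theorem exponent_mem_boundedObservables : exponent ∈ boundedObservables C B := by
  refine ⟨1, zero_le_one, fun R i t x _ => ?_⟩
  change |(R.step i).m| ≤ 1
  rw [R.step_m, abs_of_nonneg (R.m_nonneg i)]
  exact R.m_le_one i

theorem coefficient_mem_boundedObservables : coefficient ∈ boundedObservables C B := by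
  refine ⟨|C|, abs_nonneg C, fun R i t x _ => ?_⟩
  change |(R.step i).c| ≤ |C|
  rw [R.step_c]
  exact abs_le_abs_of_nonneg (R.c_nonneg i) (R.c_le i)

theorem parameter_mem_boundedObservables : parameter ∈ boundedObservables C B :=
  ⟨|B|, abs_nonneg B, fun _ _ _ _ ht => ht.trans (le_abs_self B)⟩

theorem shift_mem_boundedObservables (hf : f ∈ boundedObservables C B) :
    shift f ∈ boundedObservables C B := by
  obtain ⟨F, hF, hf⟩ := hf
  exact ⟨F, hF, fun R i => hf R (i + 1)⟩

theorem mean_mem_boundedObservables (hf : f ∈ boundedObservables C B) :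
    mean f ∈ boundedObservables C B := by
  obtain ⟨F, hF, hb⟩ := hf
  exact ⟨F, hF, fun R i t x ht => (R.step i).abs_mean_le (f.2 R i) (fun y => hb R i t y ht) x⟩

theorem cov_mem_boundedObservables (hf : f ∈ boundedObservables C B)
    (hg : g ∈ boundedObservables C B) : cov f g ∈ boundedObservables C B :=
  sub_mem (mean_mem_boundedObservables (mul_mem_boundedObservables hf hg))
    (mul_mem_boundedObservables (mean_mem_boundedObservables hf) (mean_mem_boundedObservables hg))

theorem mul_mem_summableObservables (hf : f ∈ boundedObservables C B)
    (hg : g ∈ summableObservables C B) : f * g ∈ summableObservables C B := by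
  obtain ⟨F, hF, hf⟩ := hf
  obtain ⟨K, hK, Q, hQ, hg⟩ := hg
  refine ⟨F * K, mul_nonneg hF hK, F • Q, fun R i t x ht => ?_, fun R i t x ht => ?_⟩
  · exact ⟨mul_nonneg hF (hQ R i t x ht).1, mul_le_mul_of_nonneg_left (hQ R i t x ht).2 hF⟩
  · rw [map_smul]
    calc |f R i t x * g R i t x| + F * drift Q R i t x
        ≤ F * |g R i t x| + F * drift Q R i t x := by
          rw [abs_mul]
          gcongr
          exact hf R i t x ht
      _ ≤ F * (K * R.c i) := by
          rw [← mul_add]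
          exact mul_le_mul_of_nonneg_left (hg R i t x ht) hF
      _ = F * K * R.c i := (mul_assoc _ _ _).symm

theorem smul_mem_summableObservables (d : ℝ) (hf : f ∈ summableObservables C B) :
    d • f ∈ summableObservables C B := by
  rw [Algebra.smul_def]
  exact mul_mem_summableObservables ⟨|d|, abs_nonneg d, fun _ _ _ _ _ => le_rfl⟩ hf

theorem coefficient_mul_mem_summableObservables (hf : f ∈ boundedObservables C B) :
    coefficient * f ∈ summableObservables C B := by
  obtain ⟨F, hF, hf⟩ := hf
  refine ⟨F, hF, 0, fun _ _ _ _ _ => ⟨le_rfl, hF⟩, fun R i t x ht => ?_⟩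
  rw [map_zero]
  calc |(R.step i).c * f R i t x| + 0 = R.c i * |f R i t x| := by
        rw [add_zero, abs_mul, R.step_c, abs_of_nonneg (R.c_nonneg i)]
    _ ≤ R.c i * F := mul_le_mul_of_nonneg_left (hf R i t x ht) (R.c_nonneg i)
    _ = F * R.c i := mul_comm _ _

theorem le_of_drift_le (f : Observable C) (R : Recursion C) {t F K : ℝ}
    (h₀ : ∀ x, f R 0 t x ≤ F) (h : ∀ i x, drift f R i t x ≤ K * R.c i) (i : ℕ) (x : ℝ) :
    f R i t x ≤ F + K * ∑ j ∈ Finset.range i, R.c j := by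
  induction i generalizing x with
  | zero => simpa using h₀ x
  | succ i ih =>
    have hmean : mean f R i t x ≤ F + K * ∑ j ∈ Finset.range i, R.c j :=
      (R.step i).mean_le (f.2 R i) ih x
    have hdrift : f R (i + 1) t x - mean f R i t x ≤ K * R.c i := h i x
    rw [Finset.sum_range_succ, mul_add]
    linarith

theorem mem_quasimartingales_of_drift
    (h₀ : ∃ F, ∀ (R : Recursion C) (t x : ℝ), |t| ≤ B → |f R 0 t x| ≤ F)
    (hdrift : drift f ∈ summableObservables C B) : f ∈ quasimartingales C B := by
  refine ⟨?_, hdrift⟩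
  obtain ⟨F, hF⟩ := h₀
  obtain ⟨K, hK, Q, hQ, hdrift⟩ := hdrift
  have one_sided (g : Observable C)
      (hg : ∀ R i t x, |g R i t x| = |f R i t x| ∧ |drift g R i t x| = |drift f R i t x|)
      (R : Recursion C) (i : ℕ) (t x : ℝ) (ht : |t| ≤ B) :
      g R i t x ≤ |F| + K + K * |C| := by
    have h : g R i t x + Q R i t x ≤ F + K + K * ∑ j ∈ Finset.range i, R.c j := by
      refine le_of_drift_le (g + Q) R (fun x => ?_) (fun i x => ?_) i x
      · exact add_le_add ((le_abs_self _).trans ((hg R 0 t x).1.trans_le (hF R t x ht)))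
          (hQ R 0 t x ht).2
      · rw [map_add]
        refine le_trans (add_le_add_left ?_ _) (hdrift R i t x ht)
        exact (le_abs_self _).trans (hg R i t x).2.le
    have hsum := mul_le_mul_of_nonneg_left ((R.sum_c_le i).trans (le_abs_self C)) hK
    linarith [(hQ R i t x ht).1, le_abs_self F]
  refine ⟨|F| + K + K * |C|, by positivity, fun R i t x ht => abs_le'.2 ⟨?_, ?_⟩⟩
  · exact one_sided f (fun _ _ _ _ => ⟨rfl, rfl⟩) R i t x ht
  · refine one_sided (-f) (fun R i t x => ⟨abs_neg _, ?_⟩) R i t x ht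
    rw [map_neg]
    exact abs_neg _

-- The accumulated variance of `f` telescopes through the potential `f ^ 2`.
theorem cov_self_mem_summableObservables (hf : f ∈ quasimartingales C B) :
    cov f f ∈ summableObservables C B := by
  obtain ⟨⟨F, hF, hb⟩, K, hK, Q, hQ, hd⟩ := hf
  refine ⟨F * F + 2 * F * K, by positivity, f * f + (2 * F) • Q, fun R i t x ht => ?_,
    fun R i t x ht => ?_⟩
  · change 0 ≤ f R i t x * f R i t x + 2 * F * Q R i t x ∧
      f R i t x * f R i t x + 2 * F * Q R i t x ≤ F * F + 2 * F * K
    have hsq : f R i t x * f R i t x ≤ F * F :=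
      abs_le_iff_mul_self_le.1 ((hb R i t x ht).trans (le_abs_self F))
    have hQx := hQ R i t x ht
    exact ⟨add_nonneg (mul_self_nonneg _) (mul_nonneg (by positivity) hQx.1),
      add_le_add hsq (mul_le_mul_of_nonneg_left hQx.2 (by positivity))⟩
  · have hmean : |mean f R i t x| ≤ F :=
      (R.step i).abs_mean_le (f.2 R i) (fun y => hb R i t y ht) x
    have hprod : f R (i + 1) t x * drift f R i t x + mean f R i t x * drift f R i t x ≤
        2 * F * |drift f R i t x| := by
      rw [← add_mul, two_mul]
      refine (le_abs_self _).trans ((abs_mul _ _).trans_le ?_)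
      exact mul_le_mul_of_nonneg_right
        ((abs_add_le _ _).trans (add_le_add (hb R (i + 1) t x ht) hmean)) (abs_nonneg _)
    have hpot : 2 * F * (|drift f R i t x| + drift Q R i t x) ≤ 2 * F * (K * R.c i) :=
      mul_le_mul_of_nonneg_left (hd R i t x ht) (by positivity)
    have hc := mul_nonneg (mul_nonneg hF hF) (R.c_nonneg i)
    rw [map_add, map_smul, drift_mul, abs_of_nonneg (cov_self_nonneg f R i t x)]
    change cov f f R i t x + (f R (i + 1) t x * drift f R i t x +
      mean f R i t x * drift f R i t x - cov f f R i t x + 2 * F * drift Q R i t x) ≤ _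
    linarith

theorem cov_mem_summableObservables (hf : f ∈ quasimartingales C B)
    (hg : g ∈ quasimartingales C B) : cov f g ∈ summableObservables C B := by
  rw [cov_eq_polarization]
  exact smul_mem_summableObservables _ (sub_mem (sub_mem
    (cov_self_mem_summableObservables (add_mem hf hg)) (cov_self_mem_summableObservables hf))
    (cov_self_mem_summableObservables hg))

theorem mul_mem_quasimartingales (hf : f ∈ quasimartingales C B)
    (hg : g ∈ quasimartingales C B) : f * g ∈ quasimartingales C B := by
  refine mem_quasimartingales.2 ⟨mul_mem_boundedObservables hf.1 hg.1, ?_⟩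
  rw [drift_mul]
  exact sub_mem (add_mem
    (mul_mem_summableObservables (shift_mem_boundedObservables hg.1) hf.2)
    (mul_mem_summableObservables (mean_mem_boundedObservables hf.1) hg.2))
    (cov_mem_summableObservables hf hg)

/-! ### Space derivatives of observables -/

/-- The elements of a subgroup whose first `n` iterated derivatives also lie in it. -/
def jets {A : Type*} [CommRing A] [Algebra ℝ A] (δ : Derivation ℝ A A) (S : AddSubgroup A) :
    ℕ → AddSubgroup A
  | 0 => S
  | n + 1 => S ⊓ (jets δ S n).comap (δ : A →ₗ[ℝ] A).toAddMonoidHom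

section Jets

variable {A : Type*} [CommRing A] [Algebra ℝ A] {δ : Derivation ℝ A A} {S T U : AddSubgroup A}
  {n : ℕ}

theorem mem_jets_succ {a : A} : a ∈ jets δ S (n + 1) ↔ a ∈ S ∧ δ a ∈ jets δ S n := Iff.rfl

theorem jets_le : ∀ n, jets δ S n ≤ S
  | 0 => le_rfl
  | _ + 1 => inf_le_left

theorem jets_succ_le (n : ℕ) : jets δ S (n + 1) ≤ jets δ S n := by
  induction n with
  | zero => exact inf_le_left
  | succ n ih => exact fun f hf => ⟨hf.1, ih hf.2⟩

theorem jets_mono (h : S ≤ T) (n : ℕ) : jets δ S n ≤ jets δ T n := by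
  induction n with
  | zero => exact h
  | succ n ih => exact fun f hf => ⟨h hf.1, ih hf.2⟩

theorem mul_mem_jets (hmul : ∀ {a b}, a ∈ S → b ∈ T → a * b ∈ U) {a b : A}
    (ha : a ∈ jets δ S n) (hb : b ∈ jets δ T n) : a * b ∈ jets δ U n := by
  induction n generalizing a b with
  | zero => exact hmul ha hb
  | succ n ih =>
    refine mem_jets_succ.2 ⟨hmul ha.1 hb.1, ?_⟩
    rw [Derivation.leibniz, smul_eq_mul, smul_eq_mul, mul_comm b]
    exact add_mem (ih (jets_succ_le n ha) hb.2) (ih ha.2 (jets_succ_le n hb))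

theorem mem_jets_of_derivation_eq_zero {a : A} (ha : a ∈ S) (hδ : δ a = 0) (n : ℕ) :
    a ∈ jets δ S n := by
  cases n with
  | zero => exact ha
  | succ n => exact mem_jets_succ.2 ⟨ha, hδ ▸ zero_mem _⟩

end Jets

section SpaceJets

variable {n : ℕ}

theorem exponent_mem_jets (n : ℕ) : exponent ∈ jets δₓ (boundedObservables C B) n :=
  mem_jets_of_derivation_eq_zero exponent_mem_boundedObservables spaceDerivation_exponent n

theorem parameter_mem_jets (n : ℕ) : parameter ∈ jets δₓ (boundedObservables C B) n :=
  mem_jets_of_derivation_eq_zero parameter_mem_boundedObservables spaceDerivation_parameter n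

theorem coefficient_mul_mem_jets (hf : f ∈ jets δₓ (boundedObservables C B) n) :
    coefficient * f ∈ jets δₓ (summableObservables C B) n := by
  induction n generalizing f with
  | zero => exact coefficient_mul_mem_summableObservables hf
  | succ n ih =>
    refine mem_jets_succ.2 ⟨coefficient_mul_mem_summableObservables hf.1, ?_⟩
    rw [spaceDerivation_mul, spaceDerivation_coefficient, zero_mul, zero_add]
    exact ih hf.2

theorem mean_mem_jets (hu : slope ∈ jets δₓ (boundedObservables C B) n)
    (hf : f ∈ jets δₓ (boundedObservables C B) n) :
    mean f ∈ jets δₓ (boundedObservables C B) n := by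
  induction n generalizing f with
  | zero => exact mean_mem_boundedObservables hf
  | succ n ih =>
    have hmul {a b : Observable C} := mul_mem_jets (δ := δₓ) (n := n) (a := a) (b := b)
      (mul_mem_boundedObservables (C := C) (B := B))
    have hu' := jets_succ_le n hu
    have hf' := jets_succ_le n hf
    refine mem_jets_succ.2 ⟨mean_mem_boundedObservables hf.1, ?_⟩
    rw [spaceDerivation_mean]
    exact add_mem (ih hu' hf.2) (hmul (exponent_mem_jets n)
      (sub_mem (ih hu' (hmul hf' hu')) (hmul (ih hu' hf') (ih hu' hu'))))

theorem cov_mem_jets (hu : slope ∈ jets δₓ (quasimartingales C B) n)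
    (hf : f ∈ jets δₓ (quasimartingales C B) n) (hg : g ∈ jets δₓ (quasimartingales C B) n) :
    cov f g ∈ jets δₓ (summableObservables C B) n := by
  induction n generalizing f g with
  | zero => exact cov_mem_summableObservables hf hg
  | succ n ih =>
    have hmul {a b : Observable C} := mul_mem_jets (δ := δₓ) (n := n) (a := a) (b := b)
      (mul_mem_summableObservables (C := C) (B := B))
    have hmean {a : Observable C} (ha : a ∈ jets δₓ (quasimartingales C B) n) :
        mean a ∈ jets δₓ (boundedObservables C B) n :=
      mean_mem_jets (jets_mono inf_le_left n (jets_succ_le n hu)) (jets_mono inf_le_left n ha)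
    have hu' := jets_succ_le n hu
    have hf' := jets_succ_le n hf
    have hg' := jets_succ_le n hg
    refine mem_jets_succ.2 ⟨cov_mem_summableObservables hf.1 hg.1, ?_⟩
    rw [spaceDerivation_cov]
    exact add_mem (add_mem (ih hu' hf.2 hg') (ih hu' hf' hg.2)) (hmul (exponent_mem_jets n)
      (sub_mem (sub_mem (ih hu' (mul_mem_jets mul_mem_quasimartingales hf' hg') hu')
        (hmul (hmean hg') (ih hu' hf' hu'))) (hmul (hmean hf') (ih hu' hg' hu'))))

/-- Observables starting, for every recursion, from the same polynomial in `tanh`. This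
property passes to space derivatives and gives bounds on the initial function. -/
def StartsFromTanhPoly (f : Observable C) : Prop :=
  ∃ p : Polynomial ℝ, ∀ R : Recursion C, f R 0 = tanhPoly p

theorem StartsFromTanhPoly.spaceDerivation (h : StartsFromTanhPoly f) :
    StartsFromTanhPoly (δₓ f) := by
  obtain ⟨p, hp⟩ := h
  exact ⟨_, fun R => (congrArg spaceDeriv (hp R)).trans (spaceDeriv_tanhPoly p)⟩

theorem StartsFromTanhPoly.exists_bound (h : StartsFromTanhPoly f) :
    ∃ F, ∀ (R : Recursion C) (t x : ℝ), |t| ≤ B → |f R 0 t x| ≤ F := by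
  obtain ⟨p, hp⟩ := h
  obtain ⟨F, hF⟩ := exists_abs_tanhPoly_le p
  exact ⟨F, fun R t x _ => (congrArg (fun φ : ParamFun => |φ t x|) (hp R)).trans_le (hF t x)⟩

theorem startsFromTanhPoly_slope : StartsFromTanhPoly (slope : Observable C) :=
  ⟨Polynomial.X, fun _ => spaceDeriv_logCosh⟩

theorem mem_jets_quasimartingales (hu : ∀ k < n, slope ∈ jets δₓ (quasimartingales C B) k)
    (h₀ : StartsFromTanhPoly f) (hdrift : drift f ∈ jets δₓ (summableObservables C B) n) :
    f ∈ jets δₓ (quasimartingales C B) n := by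
  induction n generalizing f with
  | zero => exact mem_quasimartingales_of_drift h₀.exists_bound hdrift
  | succ n ih =>
    have hu' := hu n n.lt_succ_self
    have ih {g : Observable C} := ih (f := g) fun k hk => hu k (hk.trans n.lt_succ_self)
    have hf := ih h₀ (jets_succ_le n hdrift)
    refine mem_jets_succ.2 ⟨jets_le n hf, ih h₀.spaceDerivation ?_⟩
    rw [drift_spaceDerivation]
    exact add_mem hdrift.2 (mul_mem_jets mul_mem_summableObservables (exponent_mem_jets n)
      (cov_mem_jets hu' hf hu'))

theorem slope_mem_jets (n : ℕ) : slope ∈ jets δₓ (quasimartingales C B) n := by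
  induction n using Nat.strong_induction_on with
  | _ n ih =>
    refine mem_jets_quasimartingales ih startsFromTanhPoly_slope ?_
    rw [drift_slope]
    exact zero_mem _

theorem slope_mem_jets_boundedObservables (n : ℕ) :
    slope ∈ jets δₓ (boundedObservables C B) n :=
  jets_mono inf_le_left n (slope_mem_jets n)

end SpaceJets

/-! ### Parameter derivatives of the recursion -/

namespace Observable

/-- The parameter derivative of the functions produced by the recursion. -/
def sensitivity : Observable C := δₜ value

/-- `u_xx + m u_x²`, to which each step applies the heat flow of variance `a + c t²`. -/
def curvature : Observable C := δₓ slope + exponent * (slope * slope)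

theorem drift_sensitivity :
    drift (sensitivity : Observable C) = coefficient * (parameter * mean curvature) := by
  rw [drift_eq, sub_eq_iff_eq_add', ← mul_assoc]
  exact Subtype.ext <| funext₂ fun R i => (R.step i).paramDeriv_next

variable (f) in
theorem paramDerivation_mean : δₜ (mean f) = mean (δₜ f) +
    coefficient * (parameter * mean (δₓ (δₓ f) + exponent * (δₓ f * slope + δₓ f * slope))) +
    exponent * (cov f sensitivity + coefficient * (parameter * cov f curvature)) := by
  rw [← mul_assoc coefficient, ← mul_assoc coefficient]
  exact Subtype.ext <| funext₂ fun R i => (R.step i).paramDeriv_mean (f.2 R i)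

theorem paramDerivation_exponent : δₜ (exponent : Observable C) = 0 :=
  Subtype.ext <| funext₂ fun R i => paramDeriv_const (R.step i).m

theorem paramDerivation_coefficient : δₜ (coefficient : Observable C) = 0 :=
  Subtype.ext <| funext₂ fun R i => paramDeriv_const (R.step i).c

theorem paramDerivation_parameter : δₜ (parameter : Observable C) = 1 :=
  Subtype.ext <| funext₂ fun _ _ => paramDeriv_param

theorem paramDerivation_slope : δₜ slope = δₓ (sensitivity : Observable C) :=
  (spaceDerivation_paramDerivation_comm _).symm

theorem paramDerivation_curvature : δₜ (curvature : Observable C) =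
    δₓ (δₓ sensitivity) + exponent * (δₓ sensitivity * slope + slope * δₓ sensitivity) := by
  rw [curvature, map_add, paramDerivation_mul, paramDerivation_mul, paramDerivation_exponent,
    ← spaceDerivation_paramDerivation_comm, paramDerivation_slope, zero_mul, zero_add]

variable (f) in
theorem drift_paramDerivation :
    drift (δₜ f) = δₜ (drift f) + (δₜ (mean f) - mean (δₜ f)) := by
  rw [drift_eq, drift_eq, map_sub, show δₜ (shift f) = shift (δₜ f) from rfl]
  ring

end Observable

theorem curvature_mem_jets (n : ℕ) : curvature ∈ jets δₓ (boundedObservables C B) n := by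
  have hu := slope_mem_jets_boundedObservables (C := C) (B := B)
  exact add_mem (mem_jets_succ.1 (hu (n + 1))).2 (mul_mem_jets mul_mem_boundedObservables
    (exponent_mem_jets n) (mul_mem_jets mul_mem_boundedObservables (hu n) (hu n)))

theorem startsFromTanhPoly_sensitivity : StartsFromTanhPoly (sensitivity : Observable C) :=
  ⟨0, fun _ => paramDeriv_logCosh.trans tanhPoly_zero.symm⟩

theorem StartsFromTanhPoly.paramDerivation (h : StartsFromTanhPoly f) :
    StartsFromTanhPoly (δₜ f) := by
  obtain ⟨p, hp⟩ := h
  exact ⟨0, fun R => (congrArg paramDeriv (hp R)).trans (paramDeriv_tanhPoly p)⟩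

theorem sensitivity_mem_jets (n : ℕ) : sensitivity ∈ jets δₓ (quasimartingales C B) n := by
  refine mem_jets_quasimartingales (fun k _ => slope_mem_jets k)
    startsFromTanhPoly_sensitivity ?_
  rw [drift_sensitivity]
  exact coefficient_mul_mem_jets (mul_mem_jets mul_mem_boundedObservables (parameter_mem_jets n)
    (mean_mem_jets (slope_mem_jets_boundedObservables n) (curvature_mem_jets n)))

theorem generator_mem_boundedObservables (hf : f ∈ jets δₓ (boundedObservables C B) 2) :
    δₓ (δₓ f) + exponent * (δₓ f * slope + δₓ f * slope) ∈ boundedObservables C B := by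
  have h := mul_mem_boundedObservables hf.2.1 (slope_mem_jets_boundedObservables 0)
  exact add_mem hf.2.2 (mul_mem_boundedObservables exponent_mem_boundedObservables (add_mem h h))

theorem paramDerivation_curvature_mem_boundedObservables :
    δₜ curvature ∈ boundedObservables C B := by
  rw [paramDerivation_curvature, mul_comm slope]
  exact generator_mem_boundedObservables (jets_mono inf_le_left 2 (sensitivity_mem_jets 2))

theorem paramDerivation_mean_mem_boundedObservables
    (hf : f ∈ jets δₓ (boundedObservables C B) 2) (ht : δₜ f ∈ boundedObservables C B) :
    δₜ (mean f) ∈ boundedObservables C B := by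
  have hparam := mul_mem_boundedObservables (coefficient_mem_boundedObservables (C := C))
    (parameter_mem_boundedObservables (B := B))
  rw [paramDerivation_mean, ← mul_assoc, ← mul_assoc]
  exact add_mem (add_mem (mean_mem_boundedObservables ht) (mul_mem_boundedObservables hparam
      (mean_mem_boundedObservables (generator_mem_boundedObservables hf))))
    (mul_mem_boundedObservables exponent_mem_boundedObservables (add_mem
      (cov_mem_boundedObservables hf.1 (sensitivity_mem_jets 0).1)
      (mul_mem_boundedObservables hparam (cov_mem_boundedObservables hf.1 (curvature_mem_jets 0)))))

theorem drift_paramDerivation_sensitivity_mem_summableObservables :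
    drift (δₜ sensitivity) ∈ summableObservables C B := by
  have hs := jets_mono inf_le_left 2 (sensitivity_mem_jets (C := C) (B := B) 2)
  have hparam := parameter_mem_boundedObservables (C := C) (B := B)
  have hmean : δₜ (mean curvature) ∈ boundedObservables C B :=
    paramDerivation_mean_mem_boundedObservables (curvature_mem_jets 2)
      paramDerivation_curvature_mem_boundedObservables
  have hdrift : δₜ (drift sensitivity) ∈ summableObservables C B := by
    rw [drift_sensitivity, paramDerivation_mul, paramDerivation_mul, paramDerivation_coefficient,
      paramDerivation_parameter, zero_mul, zero_add, one_mul]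
    exact coefficient_mul_mem_summableObservables (add_mem
      (mean_mem_boundedObservables (curvature_mem_jets 0))
      (mul_mem_boundedObservables hparam hmean))
  rw [drift_paramDerivation, paramDerivation_mean, add_assoc (mean _), add_sub_cancel_left]
  exact add_mem hdrift (add_mem (coefficient_mul_mem_summableObservables
      (mul_mem_boundedObservables hparam
        (mean_mem_boundedObservables (generator_mem_boundedObservables hs))))
    (mul_mem_summableObservables exponent_mem_boundedObservables (add_mem
      (cov_mem_summableObservables (sensitivity_mem_jets 0) (sensitivity_mem_jets 0))
      (coefficient_mul_mem_summableObservables (mul_mem_boundedObservables hparam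
        (cov_mem_boundedObservables hs.1 (curvature_mem_jets 0)))))))

theorem paramDerivation_sensitivity_mem_boundedObservables (C B : ℝ) :
    δₜ sensitivity ∈ boundedObservables C B :=
  (mem_quasimartingales_of_drift startsFromTanhPoly_sensitivity.paramDerivation.exists_bound
    drift_paramDerivation_sensitivity_mem_summableObservables).1

/-! ### The recursion of an order parameter -/

section Update

variable {S : Finset ℕ} {p : ℕ} (β : ℕ → ℝ)

theorem sum_update_sq_mul (hp : p ∈ S) (s : ℝ) (w : ℕ → ℝ) :
    ∑ r ∈ S, Function.update β p s r ^ 2 * w r =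
      ∑ r ∈ S.erase p, β r ^ 2 * w r + s ^ 2 * w p := by
  rw [← Finset.sum_erase_add _ _ hp, Function.update_self,
    Finset.sum_congr rfl fun r hr => by rw [Function.update_of_ne (Finset.ne_of_mem_erase hr)]]

theorem thetaFn_eq_sum (S : Finset ℕ) (β : ℕ → ℝ) (x : ℝ) :
    thetaFn S β x = ∑ r ∈ S, β r ^ 2 * ((r - 1) * x ^ r) := by
  rw [thetaFn, xiFn, xiFn', Finset.mul_sum, ← Finset.sum_sub_distrib]
  refine Finset.sum_congr rfl fun r _ => ?_
  obtain _ | r := r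
  · simp
  · rw [Nat.add_sub_cancel, pow_succ]
    ring

theorem thetaFn_update (hp : p ∈ S) (s x : ℝ) :
    thetaFn S (Function.update β p s) x =
      thetaFn (S.erase p) β x + s ^ 2 * ((p - 1) * x ^ p) := by
  rw [thetaFn_eq_sum, thetaFn_eq_sum, sum_update_sq_mul β hp]

end Update

theorem sum_range_ite_sub_le {k : ℕ} {f : ℕ → ℝ} (hf : ∀ l ≤ k, 0 ≤ f l) (n : ℕ) :
    ∑ i ∈ Finset.range n, (if i ≤ k then f (k - i) else 0) ≤
      ∑ l ∈ Finset.range (k + 1), f l := by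
  rw [← Finset.sum_filter, ← Finset.sum_range_reflect f (k + 1)]
  simp only [Nat.add_sub_cancel]
  exact Finset.sum_le_sum_of_subset_of_nonneg
    (fun i hi => Finset.mem_range_succ_iff.2 (Finset.mem_filter.1 hi).2)
    fun i _ _ => hf _ (k.sub_le i)

end Parisi

namespace OrderParam

open Parisi

variable {k : ℕ} (op : OrderParam k)

theorem m_monotoneOn : MonotoneOn op.m (Set.Iic k) :=
  monotoneOn_of_le_add_one Set.ordConnected_Iic fun l _ _ hl => op.m_mono l hl

theorem q_monotoneOn : MonotoneOn op.q (Set.Iic (k + 1)) :=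
  monotoneOn_of_le_add_one Set.ordConnected_Iic fun l _ _ hl =>
    op.q_mono l (Nat.le_of_succ_le_succ hl)

theorem m_nonneg {l : ℕ} (hl : l ≤ k) : 0 ≤ op.m l :=
  op.m_zero ▸ op.m_monotoneOn k.zero_le hl l.zero_le

theorem m_le_one {l : ℕ} (hl : l ≤ k) : op.m l ≤ 1 :=
  op.m_last ▸ op.m_monotoneOn hl Set.self_mem_Iic hl

theorem q_nonneg {l : ℕ} (hl : l ≤ k + 1) : 0 ≤ op.q l :=
  op.q_zero ▸ op.q_monotoneOn (k + 1).zero_le hl l.zero_le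

theorem q_pow_le_q_succ_pow {l : ℕ} (hl : l ≤ k) (n : ℕ) : op.q l ^ n ≤ op.q (l + 1) ^ n :=
  pow_le_pow_left₀ (op.q_nonneg (hl.trans k.le_succ)) (op.q_mono l hl) n

/-- The coefficient of `r β_r ^ 2` in the variance `v_l`. The case `l = 0` is separate because
`op.q 0 ^ (r - 1)` is `1` rather than `0` when `r = 1`. -/
def varianceWeight (r l : ℕ) : ℝ :=
  if l = 0 then op.q 1 ^ (r - 1) else op.q (l + 1) ^ (r - 1) - op.q l ^ (r - 1)

theorem varianceWeight_nonneg (r : ℕ) {l : ℕ} (hl : l ≤ k) : 0 ≤ op.varianceWeight r l := by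
  unfold varianceWeight
  split_ifs
  · exact pow_nonneg (op.q_nonneg (Nat.le_add_left 1 k)) _
  · exact sub_nonneg.2 (op.q_pow_le_q_succ_pow hl _)

theorem sum_varianceWeight (r n : ℕ) :
    ∑ l ∈ Finset.range (n + 1), op.varianceWeight r l = op.q (n + 1) ^ (r - 1) := by
  simp [Finset.sum_range_succ', varianceWeight,
    Finset.sum_range_sub fun l => op.q (l + 1) ^ (r - 1)]

theorem opVar_eq_sum (S : Finset ℕ) (β : ℕ → ℝ) (l : ℕ) :
    opVar S β op l = ∑ r ∈ S, β r ^ 2 * (r * op.varianceWeight r l) := by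
  unfold opVar varianceWeight xiFn'
  split_ifs
  · simp only [mul_assoc]
  · simp only [← Finset.sum_sub_distrib, mul_sub, mul_assoc]

theorem opVar_nonneg (S : Finset ℕ) (β : ℕ → ℝ) {l : ℕ} (hl : l ≤ k) : 0 ≤ opVar S β op l := by
  rw [opVar_eq_sum]
  exact Finset.sum_nonneg fun r _ =>
    mul_nonneg (sq_nonneg _) (mul_nonneg r.cast_nonneg (op.varianceWeight_nonneg r hl))

/-- The recursion in the parameter `t = β_p`. It runs from `A_k` down to `A_0`, so its step `i`
has the exponent and variance of level `k - i`; after level `0` the steps are a mere padding. -/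
def recursion (S : Finset ℕ) (β : ℕ → ℝ) (p : ℕ) : Recursion p where
  a i := if i ≤ k then opVar (S.erase p) β op (k - i) else 0
  c i := if i ≤ k then p * op.varianceWeight p (k - i) else 0
  m i := op.m (k - i)
  a_nonneg i := by
    split_ifs
    exacts [op.opVar_nonneg _ β (k.sub_le i), le_rfl]
  c_nonneg i := by
    split_ifs
    exacts [mul_nonneg p.cast_nonneg (op.varianceWeight_nonneg p (k.sub_le i)), le_rfl]
  m_nonneg i := op.m_nonneg (k.sub_le i)
  m_le_one i := op.m_le_one (k.sub_le i)
  sum_c_le n := by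
    refine (sum_range_ite_sub_le (f := fun l => p * op.varianceWeight p l) (fun l hl =>
      mul_nonneg p.cast_nonneg (op.varianceWeight_nonneg p hl)) n).trans_eq ?_
    rw [← Finset.mul_sum, sum_varianceWeight, op.q_last, one_pow, mul_one]

section ParisiFunctional

variable {S : Finset ℕ} {p : ℕ} (β : ℕ → ℝ)

theorem recursion_variance (hp : p ∈ S) {i : ℕ} (hi : i ≤ k) (t : ℝ) :
    ((op.recursion S β p).step i).a + ((op.recursion S β p).step i).c * t ^ 2 =
      opVar S (Function.update β p t) op (k - i) := by
  rw [Recursion.step_a, Recursion.step_c, opVar_eq_sum, sum_update_sq_mul β hp, ← opVar_eq_sum]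
  simp only [recursion, if_pos hi]
  ring

theorem recursion_eq_parisiB (hp : p ∈ S) (t : ℝ) {i : ℕ} (hi : i ≤ k) (x : ℝ) :
    ((op.recursion S β p).step i).u t x =
      parisiB op.m (opVar S (Function.update β p t) op) k i x := by
  induction i generalizing x with
  | zero => rfl
  | succ i ih =>
    have hm : ((op.recursion S β p).step i).m = op.m (k - i) := Recursion.step_m _ _
    have hm₀ : op.m (k - i) ≠ 0 := (op.m_pos _ (Nat.le_sub_of_add_le' hi) (k.sub_le i)).ne'
    change ((op.recursion S β p).step i).next t x = _
    rw [ParisiStep.next, if_neg (hm ▸ hm₀), hm, parisiB]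
    simp only [Pi.mul_apply, const, ParisiStep.weightedAvg, ParisiStep.weight, gaussAvg, hm,
      recursion_variance op β hp (Nat.le_of_succ_le hi), ih (Nat.le_of_succ_le hi), Pi.one_apply,
      one_mul]

theorem recursion_last (hp : p ∈ S) (t h : ℝ) :
    ((op.recursion S β p).step (k + 1)).u t h =
      ∫ y, parisiB op.m (opVar S (Function.update β p t) op) k k (h + y)
        ∂gauss (opVar S (Function.update β p t) op 0) := by
  have hm : ((op.recursion S β p).step k).m = 0 := by
    rw [Recursion.step_m]
    exact (congrArg op.m k.sub_self).trans op.m_zero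
  change ((op.recursion S β p).step k).next t h = _
  rw [ParisiStep.next, if_pos hm]
  simp only [gaussAvg, recursion_variance op β hp le_rfl, Nat.sub_self,
    recursion_eq_parisiB op β hp t le_rfl]

/-- The coefficient of `-β_p ^ 2 / 2` in the Parisi functional coming from `θ`. -/
def thetaWeight (p : ℕ) : ℝ :=
  (p - 1) * ∑ l ∈ Finset.Icc 1 k, op.m l * (op.q (l + 1) ^ p - op.q l ^ p)

theorem abs_thetaWeight_le (p : ℕ) : |op.thetaWeight p| ≤ |(p : ℝ) - 1| := by
  have hincr {l : ℕ} (hl : l ∈ Finset.Icc 1 k) : 0 ≤ op.q (l + 1) ^ p - op.q l ^ p :=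
    sub_nonneg.2 (op.q_pow_le_q_succ_pow (Finset.mem_Icc.1 hl).2 p)
  have hnonneg : 0 ≤ ∑ l ∈ Finset.Icc 1 k, op.m l * (op.q (l + 1) ^ p - op.q l ^ p) :=
    Finset.sum_nonneg fun l hl => mul_nonneg (op.m_nonneg (Finset.mem_Icc.1 hl).2) (hincr hl)
  have hle : ∑ l ∈ Finset.Icc 1 k, op.m l * (op.q (l + 1) ^ p - op.q l ^ p) ≤ 1 :=
    calc ∑ l ∈ Finset.Icc 1 k, op.m l * (op.q (l + 1) ^ p - op.q l ^ p)
        ≤ ∑ l ∈ Finset.Icc 1 k, (op.q (l + 1) ^ p - op.q l ^ p) :=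
          Finset.sum_le_sum fun l hl =>
            mul_le_of_le_one_left (hincr hl) (op.m_le_one (Finset.mem_Icc.1 hl).2)
      _ = op.q (k + 1) ^ p - op.q 1 ^ p := by
          rw [← Finset.Ico_succ_right_eq_Icc]
          exact Finset.sum_Ico_sub (fun l => op.q l ^ p) (Nat.le_add_left 1 k)
      _ ≤ 1 := by
          rw [op.q_last, one_pow]
          exact sub_le_self 1 (pow_nonneg (op.q_nonneg (Nat.le_add_left 1 k)) p)
  rw [thetaWeight, abs_mul, abs_of_nonneg hnonneg]
  exact mul_le_of_le_one_right (abs_nonneg _) hle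

theorem parisiP_update (hp : p ∈ S) (h s : ℝ) :
    parisiP S h (Function.update β p s) op =
      ((op.recursion S β p).step (k + 1)).u s h - (1 / 2) * (∑ l ∈ Finset.Icc 1 k, op.m l *
        (thetaFn (S.erase p) β (op.q (l + 1)) - thetaFn (S.erase p) β (op.q l)) +
          s ^ 2 * op.thetaWeight p) := by
  rw [parisiP, ← recursion_last op β hp, thetaWeight, Finset.mul_sum _ _ ((p : ℝ) - 1),
    Finset.mul_sum _ _ (s ^ 2), ← Finset.sum_add_distrib]
  congr 2
  refine Finset.sum_congr rfl fun l _ => ?_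
  rw [thetaFn_update β hp, thetaFn_update β hp]
  ring

theorem hasDerivAt_parisiP_update (hp : p ∈ S) (h t : ℝ) :
    HasDerivAt (fun s => parisiP S h (Function.update β p s) op)
      (paramDeriv ((op.recursion S β p).step (k + 1)).u t h - t * op.thetaWeight p) t := by
  simp only [parisiP_update op β hp]
  refine ((((op.recursion S β p).step (k + 1)).tame_u.hasDerivAt_param t h).sub
    ((((hasDerivAt_pow 2 t).mul_const (op.thetaWeight p)).const_add _).const_mul
      (1 / 2 : ℝ))).congr_deriv ?_
  push_cast
  ring

end ParisiFunctional

end OrderParam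

theorem parisiP_second_deriv_bounded_general (B : ℝ) (p : ℕ) :
    ∃ L : ℝ, ∀ S : Finset ℕ, p ∈ S → ∀ (h : ℝ) {k : ℕ} (op : OrderParam k) (β : ℕ → ℝ),
      ∃ g' g'' : ℝ → ℝ,
        (∀ t : ℝ, HasDerivAt (fun s : ℝ => parisiP S h (Function.update β p s) op) (g' t) t) ∧
        (∀ t : ℝ, HasDerivAt g' (g'' t) t) ∧
        (∀ t : ℝ, |t| ≤ B → |g'' t| ≤ L) := by
  obtain ⟨K, -, hK⟩ := Parisi.paramDerivation_sensitivity_mem_boundedObservables p B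
  refine ⟨K + |(p : ℝ) - 1|, fun S hp h k op β => ?_⟩
  have hu := ((op.recursion S β p).step (k + 1)).tame_u.paramDeriv
  refine ⟨_, fun t => _, op.hasDerivAt_parisiP_update β hp h, fun t =>
    (hu.hasDerivAt_param t h).sub (hasDerivAt_mul_const (op.thetaWeight p)), fun t ht => ?_⟩
  exact (abs_sub _ _).trans
    (add_le_add (hK (op.recursion S β p) (k + 1) t h ht) (op.abs_thetaWeight_le p))

/-- For every `B > 0` and `p ∈ S` there is an `L` such that for every `k ≥ 1`, every
discrete order parameter with at most `k` atoms, and every `β` with all coordinates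
bounded by `B` in absolute value, the map `β_p ↦ P(m,q;β)` is twice differentiable with
second derivative bounded in absolute value by `L` on `[-B,B]`. -/
theorem parisiP_second_deriv_bounded
    (S : Finset ℕ) (hS : ∀ p ∈ S, 0 < p) (h : ℝ)
    (B : ℝ) (hB : 0 < B) (p : ℕ) (hp : p ∈ S) :
    ∃ L : ℝ, ∀ k : ℕ, 1 ≤ k → ∀ op : OrderParam k, ∀ β : ℕ → ℝ,
      (∀ r ∈ S, |β r| ≤ B) →
      ∃ g' g'' : ℝ → ℝ,
        (∀ t : ℝ, HasDerivAt (fun s : ℝ => parisiP S h (Function.update β p s) op) (g' t) t) ∧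
        (∀ t : ℝ, HasDerivAt g' (g'' t) t) ∧
        (∀ t : ℝ, |t| ≤ B → |g'' t| ≤ L) := by
  obtain ⟨L, hL⟩ := parisiP_second_deriv_bounded_general B p
  exact ⟨L, fun k _ op β _ => hL S hp h op β⟩
end
end
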